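/- arXiv:2506.02385 — 9 statements merged into one kernel-verified Lean document; each statement's English description precedes it below -/
import Mathlib

section
/- Let α and β be finite types, P a transition matrix over α × β admitting a strictly positive stationary probability vector μ. Suppose P = ∑_{j∈K} x_j (A_j ⊗ B_j) for a finite index set K, reals x_j with ∑_{j∈K} x_j = 1, transition matrices A_j over α, and transition matrices B_j over β. Then the marginalized local transition matrix P_A equals ∑_{j∈K} x_j A_j, and the marginalized local transition matrix P_B equals ∑_{j∈K} x_j B_j. -/
open Matrix

/-- A transition matrix: nonnegative entries, each row sums to 1. -/
def IsTransition {ι : Type*} [Fintype ι] (P : Matrix ι ι ℝ) : Prop :=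
  (∀ i j, 0 ≤ P i j) ∧ ∀ i, ∑ j, P i j = 1

/-- Kronecker product of a matrix over `α` and a matrix over `β`. -/
def kron {α β : Type*} (A : Matrix α α ℝ) (B : Matrix β β ℝ) :
    Matrix (α × β) (α × β) ℝ :=
  Matrix.of fun p q => A p.1 q.1 * B p.2 q.2

/-- The marginalized local transition matrix of agent `A`. -/
noncomputable def localA {α β : Type*} [Fintype α] [Fintype β]
    (P : Matrix (α × β) (α × β) ℝ) (μ : α × β → ℝ) : Matrix α α ℝ :=
  Matrix.of fun a a' =>
    ∑ b, (μ (a, b) / ∑ b', μ (a, b')) * ∑ b', P (a, b) (a', b')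

/-- The marginalized local transition matrix of agent `B`. -/
noncomputable def localB {α β : Type*} [Fintype α] [Fintype β]
    (P : Matrix (α × β) (α × β) ℝ) (μ : α × β → ℝ) : Matrix β β ℝ :=
  Matrix.of fun b b' =>
    ∑ a, (μ (a, b) / ∑ a', μ (a', b)) * ∑ a', P (a, b) (a', b')

/-! For fixed `μ`, marginalization is linear in `P`. It sends `kron A B` to `A`: the rows of `B` sum
to 1, so what remains is the average of a constant against the weights `μ (a, b) / ∑ b', μ (a, b')`.
Exchanging the two coordinates turns the claim for agent `B` into the claim for agent `A`. -/

section Marginalization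

variable {α β K : Type*}

lemma kron_submatrix_swap (A : Matrix α α ℝ) (B : Matrix β β ℝ) :
    (kron A B).submatrix Prod.swap Prod.swap = kron B A := by
  ext p q
  exact mul_comm _ _

variable [Fintype α] [Fintype β]

lemma isLinearMap_localA (μ : α × β → ℝ) :
    IsLinearMap ℝ fun P : Matrix (α × β) (α × β) ℝ => localA P μ where
  map_add P Q := by
    ext a a'
    simp only [localA, of_apply, Matrix.add_apply, Finset.sum_add_distrib, mul_add]
  map_smul c P := by
    ext a a'
    simp only [localA, of_apply, Matrix.smul_apply, smul_eq_mul, Finset.mul_sum, mul_left_comm]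

lemma localA_sum_smul (s : Finset K) (x : K → ℝ) (P : K → Matrix (α × β) (α × β) ℝ)
    (μ : α × β → ℝ) :
    localA (∑ j ∈ s, x j • P j) μ = ∑ j ∈ s, x j • localA (P j) μ := by
  simpa only [IsLinearMap.mk'_apply, (isLinearMap_localA μ).map_smul] using
    map_sum ((isLinearMap_localA μ).mk' _) (fun j => x j • P j) s

lemma localA_kron (A : Matrix α α ℝ) {B : Matrix β β ℝ} (hB : ∀ b, ∑ b', B b b' = 1)
    {μ : α × β → ℝ} (hμ : ∀ a, ∑ b, μ (a, b) ≠ 0) : localA (kron A B) μ = A := by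
  ext a a'
  calc localA (kron A B) μ a a'
      = ∑ b, (μ (a, b) / ∑ b', μ (a, b')) * A a a' := by
        simp only [localA, kron, of_apply, ← Finset.mul_sum, hB, mul_one]
    _ = A a a' := by
        rw [← Finset.sum_mul, ← Finset.sum_div, div_self (hμ a), one_mul]

lemma localB_eq_localA_swap (P : Matrix (α × β) (α × β) ℝ) (μ : α × β → ℝ) :
    localB P μ = localA (P.submatrix Prod.swap Prod.swap) (μ ∘ Prod.swap) :=
  rfl

lemma localB_sum_smul (s : Finset K) (x : K → ℝ) (P : K → Matrix (α × β) (α × β) ℝ)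
    (μ : α × β → ℝ) :
    localB (∑ j ∈ s, x j • P j) μ = ∑ j ∈ s, x j • localB (P j) μ := by
  have submatrix_sum : (∑ j ∈ s, x j • P j).submatrix Prod.swap Prod.swap =
      ∑ j ∈ s, x j • (P j).submatrix Prod.swap Prod.swap := by
    ext p q
    simp only [submatrix_apply, Matrix.sum_apply, Matrix.smul_apply]
  simp only [localB_eq_localA_swap, submatrix_sum, localA_sum_smul]

lemma localB_kron {A : Matrix α α ℝ} (hA : ∀ a, ∑ a', A a a' = 1) (B : Matrix β β ℝ)
    {μ : α × β → ℝ} (hμ : ∀ b, ∑ a, μ (a, b) ≠ 0) : localB (kron A B) μ = B := by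
  rw [localB_eq_localA_swap, kron_submatrix_swap]
  exact localA_kron B hA hμ

lemma marginals_ne_zero_of_pos {μ : α × β → ℝ} (hμpos : ∀ p, 0 < μ p) (hμsum : ∑ p, μ p ≠ 0) :
    (∀ a, ∑ b, μ (a, b) ≠ 0) ∧ ∀ b, ∑ a, μ (a, b) ≠ 0 := by
  obtain ⟨⟨a₀, b₀⟩, -, -⟩ := Finset.exists_ne_zero_of_sum_ne_zero hμsum
  exact ⟨fun a => (Finset.sum_pos (fun b _ => hμpos (a, b)) ⟨b₀, Finset.mem_univ b₀⟩).ne',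
    fun b => (Finset.sum_pos (fun a _ => hμpos (a, b)) ⟨a₀, Finset.mem_univ a₀⟩).ne'⟩

end Marginalization

theorem stmt1_general {α β K : Type*} [Fintype α] [Fintype β] [Fintype K]
    (P : Matrix (α × β) (α × β) ℝ) (μ : α × β → ℝ)
    (hμA : ∀ a, ∑ b, μ (a, b) ≠ 0) (hμB : ∀ b, ∑ a, μ (a, b) ≠ 0) (x : K → ℝ)
    (A : K → Matrix α α ℝ) (B : K → Matrix β β ℝ)
    (hA : ∀ j a, ∑ a', A j a a' = 1) (hB : ∀ j b, ∑ b', B j b b' = 1)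
    (hsep : P = ∑ j, x j • kron (A j) (B j)) :
    localA P μ = ∑ j, x j • A j ∧ localB P μ = ∑ j, x j • B j := by
  subst hsep
  constructor
  · simp only [localA_sum_smul, localA_kron _ (hB _) hμA]
  · simp only [localB_sum_smul, localB_kron (hA _) _ hμB]

/-- If a transition matrix with strictly positive stationary distribution is separable,
then its marginalized local transitions are the corresponding linear combinations. -/
theorem stmt1 {α β K : Type*} [Fintype α] [Fintype β] [Fintype K]
    (P : Matrix (α × β) (α × β) ℝ) (hP : IsTransition P)
    (μ : α × β → ℝ) (hμpos : ∀ p, 0 < μ p) (hμsum : ∑ p, μ p = 1)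
    (hstat : ∀ q, ∑ p, μ p * P p q = μ q)
    (x : K → ℝ) (hx : ∑ j, x j = 1)
    (A : K → Matrix α α ℝ) (B : K → Matrix β β ℝ)
    (hA : ∀ j, IsTransition (A j)) (hB : ∀ j, IsTransition (B j))
    (hsep : P = ∑ j, x j • kron (A j) (B j)) :
    localA P μ = ∑ j, x j • A j ∧ localB P μ = ∑ j, x j • B j := by
  have ⟨hμA, hμB⟩ := marginals_ne_zero_of_pos hμpos (hμsum.trans_ne one_ne_zero)
  exact stmt1_general P μ hμA hμB x A B (fun j => (hA j).2) (fun j => (hB j).2) hsep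
end

section
/- For every natural number m ≥ 1, the ℝ-linear span (inside the vector space of m × m real matrices) of the set of all m × m row-stochastic matrices has dimension m² − m + 1. -/
open Matrix

/-!
A row-stochastic matrix has constant row sums. Conversely, let `D f` be the `0`-`1` matrix whose
row `i` is the basis vector at `f i`; it is row-stochastic. Changing `f` at a single row shows that
every `E i j - E i j'` is a difference of two row-stochastic matrices, and a matrix with constant
row sum `c` is `∑ i j, M i j • (E i j - E i j₀) + c • D (const j₀)`. So the span is the space of
matrices with constant row sums. Such a matrix is given by its row sum and its entries outside one
column, both of which are arbitrary.
-/

section ExtendWithSum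

variable {A κ : Type*} [AddCommGroup A] [Fintype κ] [DecidableEq κ] (j₀ : κ)

/-- The vector with prescribed entries `v` away from `j₀`, whose entry at `j₀` is chosen so that
the entries add up to `c`. -/
def extendWithSum (c : A) (v : {j // j ≠ j₀} → A) (j : κ) : A :=
  if hj : j = j₀ then c - ∑ j', v j' else v ⟨j, hj⟩

lemma extendWithSum_apply (c : A) (v : {j // j ≠ j₀} → A) (j : {j // j ≠ j₀}) :
    extendWithSum j₀ c v j = v j :=
  dif_neg j.2

lemma sum_extendWithSum (c : A) (v : {j // j ≠ j₀} → A) : ∑ j, extendWithSum j₀ c v j = c := by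
  simp only [Fintype.sum_eq_add_sum_subtype_ne _ j₀, extendWithSum_apply]
  simp [extendWithSum]

lemma extendWithSum_restrict (v : κ → A) :
    extendWithSum j₀ (∑ j, v j) (fun j => v j) = v := by
  funext j
  obtain rfl | hj := eq_or_ne j j₀
  · simp [extendWithSum, Fintype.sum_eq_add_sum_subtype_ne v j]
  · exact extendWithSum_apply j₀ _ _ ⟨j, hj⟩

end ExtendWithSum

section ConstRowSum

variable (R ι κ : Type*) [Ring R] [Fintype κ]

/-- The space of matrices all of whose rows have the same sum; it turns out to be the linear span
of the row-stochastic matrices. -/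
def constRowSum : Submodule R (Matrix ι κ R) where
  carrier := {M | ∃ c, ∀ i, ∑ j, M i j = c}
  zero_mem' := ⟨0, by simp⟩
  add_mem' := by
    rintro M N ⟨c, hM⟩ ⟨d, hN⟩
    exact ⟨c + d, fun i => by simp only [Matrix.add_apply, Finset.sum_add_distrib, hM, hN]⟩
  smul_mem' := by
    rintro a M ⟨c, hM⟩
    exact ⟨a * c, fun i => by simp only [Matrix.smul_apply, smul_eq_mul, ← Finset.mul_sum, hM]⟩

variable {ι κ} in
/-- Coordinates on `constRowSum`: the common row sum, read off in row `i₀`, and the entries outside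
column `j₀`. -/
def constRowSumEquiv [DecidableEq κ] (i₀ : ι) (j₀ : κ) :
    constRowSum R ι κ ≃ₗ[R] R × (ι → {j // j ≠ j₀} → R) where
  toFun M := (∑ j, M.1 i₀ j, fun i j => M.1 i j)
  map_add' M N := by ext <;> simp [Finset.sum_add_distrib]
  map_smul' a M := by ext <;> simp [Finset.mul_sum]
  invFun x := ⟨of fun i => extendWithSum j₀ x.1 (x.2 i), x.1, fun i => sum_extendWithSum ..⟩
  left_inv := by
    rintro ⟨M, c, hM⟩
    ext i j
    change extendWithSum j₀ (∑ j, M i₀ j) (fun j => M i j) j = M i j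
    rw [(hM i₀).trans (hM i).symm, extendWithSum_restrict]
  right_inv x := by
    ext
    · exact sum_extendWithSum ..
    · exact extendWithSum_apply ..

lemma finrank_constRowSum [StrongRankCondition R] [Fintype ι] [Nonempty ι] [Nonempty κ] :
    Module.finrank R (constRowSum R ι κ) = Fintype.card ι * (Fintype.card κ - 1) + 1 := by
  classical
  let i₀ : ι := Classical.arbitrary ι
  let j₀ : κ := Classical.arbitrary κ
  simp [(constRowSumEquiv R i₀ j₀).finrank_eq, Module.finrank_prod, Module.finrank_pi_fintype,
    add_comm]

end ConstRowSum

section Deterministic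

variable (R : Type*) {ι κ : Type*} [Ring R] [DecidableEq κ]

/-- The row-stochastic matrix of a deterministic transition: row `i` is the basis vector at
`f i`. -/
def deterministicMatrix (f : ι → κ) : Matrix ι κ R :=
  of fun i => Pi.single (f i) 1

variable [DecidableEq ι]

lemma deterministicMatrix_update_sub (f : ι → κ) (i : ι) (j : κ) :
    deterministicMatrix R (Function.update f i j) - deterministicMatrix R f =
      single i j 1 - single i (f i) 1 := by
  ext a b
  obtain rfl | ha := eq_or_ne i a
  · simp [deterministicMatrix, single_apply, Pi.single_apply, eq_comm]
  · simp [deterministicMatrix, ha, ha.symm]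

lemma deterministicMatrix_eq_sum_single [Fintype ι] (f : ι → κ) :
    deterministicMatrix R f = ∑ i, single i (f i) 1 := by
  ext a b
  simp [deterministicMatrix, Matrix.sum_apply, single_apply, Pi.single_apply, eq_comm, ite_and]

variable {R}

lemma eq_sum_single_sub_add_deterministicMatrix [Fintype ι] [Fintype κ]
    {M : Matrix ι κ R} {c : R} (hM : ∀ i, ∑ j, M i j = c) (j₀ : κ) :
    M = ∑ i, ∑ j, M i j • (single i j 1 - single i j₀ 1) +
      c • deterministicMatrix R fun _ => j₀ := by
  have sum_single : ∑ i, ∑ j, M i j • single i j (1 : R) = M := by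
    simpa using (matrix_eq_sum_single M).symm
  simp only [smul_sub, Finset.sum_sub_distrib, ← Finset.sum_smul, hM, sum_single,
    deterministicMatrix_eq_sum_single, Finset.smul_sum, sub_add_cancel]

end Deterministic

section Stochastic

variable (R ι κ : Type*) [Ring R] [Preorder R] [Fintype κ]

/-- The row-stochastic matrices, not necessarily square, unlike those of `IsTransition` and
`Matrix.rowStochastic`. -/
def stochasticMatrices : Set (Matrix ι κ R) :=
  {P | (∀ i j, 0 ≤ P i j) ∧ ∀ i, ∑ j, P i j = 1}

variable [ZeroLEOneClass R] {ι κ}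

lemma deterministicMatrix_mem_stochasticMatrices [DecidableEq κ] (f : ι → κ) :
    deterministicMatrix R f ∈ stochasticMatrices R ι κ :=
  ⟨fun _ => Pi.single_nonneg.2 zero_le_one, fun i => Fintype.sum_pi_single' (f i) 1⟩

variable (ι κ) [Nonempty κ]

lemma span_stochasticMatrices [Finite ι] :
    Submodule.span R (stochasticMatrices R ι κ) = constRowSum R ι κ := by
  classical
  have := Fintype.ofFinite ι
  refine le_antisymm (Submodule.span_le.2 fun P hP => ⟨1, hP.2⟩) ?_
  rintro M ⟨c, hM⟩
  have deterministic_mem (f : ι → κ) :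
      deterministicMatrix R f ∈ Submodule.span R (stochasticMatrices R ι κ) :=
    Submodule.subset_span (deterministicMatrix_mem_stochasticMatrices R f)
  let j₀ : κ := Classical.arbitrary κ
  have single_sub_mem (i : ι) (j : κ) :
      single i j 1 - single i j₀ 1 ∈ Submodule.span R (stochasticMatrices R ι κ) := by
    rw [← deterministicMatrix_update_sub R (fun _ => j₀)]
    exact sub_mem (deterministic_mem _) (deterministic_mem _)
  rw [eq_sum_single_sub_add_deterministicMatrix hM j₀]
  exact add_mem
    (sum_mem fun i _ => sum_mem fun j _ => Submodule.smul_mem _ _ (single_sub_mem i j))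
    (Submodule.smul_mem _ _ (deterministic_mem _))

theorem stmt3_general [StrongRankCondition R] [Fintype ι] [Nonempty ι] :
    Module.finrank R (Submodule.span R (stochasticMatrices R ι κ)) =
      Fintype.card ι * (Fintype.card κ - 1) + 1 := by
  rw [span_stochasticMatrices, finrank_constRowSum]

end Stochastic

/-- The span of the set of `m × m` row-stochastic matrices has dimension `m² − m + 1`. -/
theorem stmt3 (m : ℕ) (hm : 1 ≤ m) :
    Module.finrank ℝ
        ↥(Submodule.span ℝ {M : Matrix (Fin m) (Fin m) ℝ | IsTransition M})
      = m ^ 2 - m + 1 := by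
  have : Nonempty (Fin m) := Fin.pos_iff_nonempty.1 hm
  have finrank_eq := stmt3_general ℝ (Fin m) (Fin m)
  rwa [Fintype.card_fin, Nat.mul_sub_one, ← sq] at finrank_eq
end

section
/- For every natural number m ≥ 1, the ℝ-linear span (inside the vector space of m² × m² real matrices) of the set { A ⊗ B : A and B are m × m row-stochastic matrices }, where ⊗ denotes the Kronecker product, has dimension (m² − m + 1)². -/
open Matrix

/-
The row-stochastic matrices span the space `E` of all matrices with equal row sums: adding a large
multiple of the all-ones matrix to an element of `E` makes it nonnegative, and a nonnegative element
of `E` is a multiple of a row-stochastic matrix. Now `E` is the preimage of the line of constant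
vectors under the surjection sending a matrix to its row sums, so it has codimension `m - 1`. As the
Kronecker product realises the tensor product of matrix spaces, the span in question is `E ⊗ E`.
-/

open Module
open scoped Kronecker

theorem finrank_comap_add_finrank {K V W : Type*} [DivisionRing K] [AddCommGroup V] [Module K V]
    [AddCommGroup W] [Module K W] [FiniteDimensional K V] {f : V →ₗ[K] W}
    (hf : Function.Surjective f) (U : Submodule K W) :
    finrank K (U.comap f) + finrank K W = finrank K V + finrank K U := by
  have : FiniteDimensional K W := Module.Finite.of_surjective f hf
  let g : V →ₗ[K] W ⧸ U := U.mkQ ∘ₗ f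
  have ker_g : LinearMap.ker g = U.comap f := by rw [LinearMap.ker_comp, Submodule.ker_mkQ]
  have range_g : LinearMap.range g = ⊤ :=
    LinearMap.range_eq_top.2 ((Submodule.mkQ_surjective U).comp hf)
  have rank_nullity := g.finrank_range_add_finrank_ker
  rw [range_g, finrank_top, ker_g] at rank_nullity
  have := U.finrank_quotient_add_finrank
  omega

section Kronecker

variable {K : Type*} [Field K]

theorem finrank_map₂_mk {V W : Type*} [AddCommGroup V] [Module K V] [AddCommGroup W] [Module K W]
    (S : Submodule K V) (T : Submodule K W) :
    finrank K (Submodule.map₂ (TensorProduct.mk K V W) S T) = finrank K S * finrank K T := by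
  rw [← TensorProduct.range_mapIncl, LinearMap.finrank_range_of_inj, finrank_tensorProduct]
  exact TensorProduct.map_injective_of_flat_flat _ _ S.injective_subtype T.injective_subtype

theorem finrank_map₂_kroneckerBilinear {l m n p : Type*} [Finite l] [Finite m] [Finite n]
    [Finite p] (S : Submodule K (Matrix l m K)) (T : Submodule K (Matrix n p K)) :
    finrank K (Submodule.map₂ (kroneckerBilinear (R := K) (α := K)) S T) =
      finrank K S * finrank K T := by
  classical
  have := Fintype.ofFinite l
  have := Fintype.ofFinite m
  have := Fintype.ofFinite n
  have := Fintype.ofFinite p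
  have map_mk : Submodule.map₂ (kroneckerBilinear (R := K) (α := K)) S T =
      (Submodule.map₂ (TensorProduct.mk K _ _) S T).map
        (kroneckerLinearEquiv l m n p K).toLinearMap := by
    rw [Submodule.map_map₂]
    rfl
  rw [map_mk, LinearEquiv.finrank_map_eq, finrank_map₂_mk]

end Kronecker

section EqualRowSums

/-- The subspace of matrices whose row sums are all equal, encoded as the matrices sending the
all-ones vector to a multiple of the all-ones vector. -/
def equalRowSums (R m n : Type*) [CommSemiring R] [Fintype n] : Submodule R (Matrix m n R) :=
  (Submodule.span R {(1 : m → R)}).comap ((mulVecBilin R R).flip 1)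

theorem mem_equalRowSums {R m n : Type*} [CommSemiring R] [Fintype n] {A : Matrix m n R} :
    A ∈ equalRowSums R m n ↔ ∃ c, ∀ i, ∑ j, A i j = c := by
  simp [equalRowSums, Submodule.mem_span_singleton, funext_iff, mulVec, dotProduct, eq_comm]

variable {K m n : Type*} [Field K] [Fintype n]

theorem mulVecBilin_flip_surjective {v : n → K} (hv : v ≠ 0) :
    Function.Surjective ((mulVecBilin (m := m) K K).flip v) := by
  classical
  intro w
  obtain ⟨j, hj⟩ := Function.ne_iff.1 hv
  exact ⟨vecMulVec w (Pi.single j (v j)⁻¹), by simp [vecMulVec_mulVec, inv_mul_cancel₀ hj]⟩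

theorem finrank_equalRowSums [Fintype m] [Nonempty m] [Nonempty n] :
    finrank K (equalRowSums K m n) = Fintype.card m * (Fintype.card n - 1) + 1 := by
  have codim : finrank K (equalRowSums K m n) + finrank K (m → K) =
      finrank K (Matrix m n K) + finrank K (Submodule.span K {(1 : m → K)}) :=
    finrank_comap_add_finrank (mulVecBilin_flip_surjective one_ne_zero) _
  rw [finrank_span_singleton one_ne_zero, finrank_matrix, finrank_pi, finrank_self,
    mul_one] at codim
  have := Nat.le_mul_of_pos_right (Fintype.card m) (Fintype.card_pos (α := n))
  rw [Nat.mul_sub_one]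
  omega

end EqualRowSums

section Stochastic

variable {K n : Type*} [Field K] [LinearOrder K] [IsStrictOrderedRing K] [Fintype n]
  [DecidableEq n]

theorem mem_span_rowStochastic_of_nonneg {A : Matrix n n K} (hA : ∀ i j, 0 ≤ A i j)
    (hsum : A ∈ equalRowSums K n n) : A ∈ Submodule.span K (rowStochastic K n : Set _) := by
  obtain ⟨c, hc⟩ := mem_equalRowSums.1 hsum
  have entry_le (i j : n) : A i j ≤ c :=
    hc i ▸ Finset.single_le_sum (fun j _ => hA i j) (Finset.mem_univ j)
  rcases eq_or_ne c 0 with rfl | hc0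
  · have A_eq_zero : A = 0 := Matrix.ext fun i j => (entry_le i j).antisymm (hA i j)
    exact A_eq_zero ▸ Submodule.zero_mem _
  · have stochastic : c⁻¹ • A ∈ rowStochastic K n := by
      refine mem_rowStochastic_iff_sum.2 ⟨fun i j => ?_, fun i => ?_⟩
      · exact mul_nonneg (inv_nonneg.2 ((hA i j).trans (entry_le i j))) (hA i j)
      · simp only [Matrix.smul_apply, smul_eq_mul, ← Finset.mul_sum, hc, inv_mul_cancel₀ hc0]
    rw [← smul_inv_smul₀ hc0 A]
    exact Submodule.smul_mem _ c (Submodule.subset_span stochastic)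

theorem span_rowStochastic :
    Submodule.span K (rowStochastic K n : Set (Matrix n n K)) = equalRowSums K n n := by
  refine le_antisymm (Submodule.span_le.2 fun A hA => ?_) fun A hA => ?_
  · exact mem_equalRowSums.2 ⟨1, sum_row_of_mem_rowStochastic hA⟩
  · obtain ⟨b, hb⟩ := (Set.finite_range fun p : n × n => A p.1 p.2).bddBelow
    let J : Matrix n n K := of fun _ _ => |b|
    have hJ : J ∈ equalRowSums K n n := mem_equalRowSums.2 ⟨∑ _ : n, |b|, fun _ => rfl⟩
    have entry_nonneg (i j : n) : 0 ≤ (A + J) i j :=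
      neg_le_iff_add_nonneg.1 ((neg_abs_le b).trans (hb ⟨(i, j), rfl⟩))
    rw [← add_sub_cancel_right A J]
    exact Submodule.sub_mem _
      (mem_span_rowStochastic_of_nonneg entry_nonneg (Submodule.add_mem _ hA hJ))
      (mem_span_rowStochastic_of_nonneg (fun _ _ => abs_nonneg b) hJ)

end Stochastic

theorem setOf_kron_isTransition {α β : Type*} [Fintype α] [Fintype β] [DecidableEq α]
    [DecidableEq β] :
    {M | ∃ (A : Matrix α α ℝ) (B : Matrix β β ℝ),
        IsTransition A ∧ IsTransition B ∧ M = kron A B} =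
      Set.image2 (· ⊗ₖ ·) (rowStochastic ℝ α) (rowStochastic ℝ β) := by
  ext M
  simp only [Set.mem_ofPred_eq, Set.mem_image2, SetLike.mem_coe, mem_rowStochastic_iff_sum]
  constructor
  · rintro ⟨A, B, hA, hB, rfl⟩
    exact ⟨A, hA, B, hB, rfl⟩
  · rintro ⟨A, hA, B, hB, rfl⟩
    exact ⟨A, B, hA, hB, rfl⟩

theorem stmt4_general (K α β : Type*) [Field K] [LinearOrder K] [IsStrictOrderedRing K]
    [Fintype α] [Fintype β] [DecidableEq α] [DecidableEq β] [Nonempty α] [Nonempty β] :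
    finrank K (Submodule.span K
        (Set.image2 (· ⊗ₖ ·) (rowStochastic K α : Set (Matrix α α K)) (rowStochastic K β) :
          Set (Matrix (α × β) (α × β) K))) =
      (Fintype.card α * (Fintype.card α - 1) + 1) *
        (Fintype.card β * (Fintype.card β - 1) + 1) := by
  have span_eq_map₂ := Submodule.map₂_span_span K (kroneckerBilinear (R := K) (α := K))
    (rowStochastic K α : Set (Matrix α α K)) (rowStochastic K β : Set (Matrix β β K))
  simp only [span_rowStochastic] at span_eq_map₂
  rw [← finrank_equalRowSums (K := K), ← finrank_equalRowSums (K := K),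
    ← finrank_map₂_kroneckerBilinear, span_eq_map₂]
  rfl

/-- The span of Kronecker products of `m × m` row-stochastic matrices
has dimension `(m² − m + 1)²`. -/
theorem stmt4 (m : ℕ) (hm : 1 ≤ m) :
    Module.finrank ℝ
        ↥(Submodule.span ℝ
          {M : Matrix (Fin m × Fin m) (Fin m × Fin m) ℝ |
            ∃ A B : Matrix (Fin m) (Fin m) ℝ,
              IsTransition A ∧ IsTransition B ∧ M = kron A B})
      = (m ^ 2 - m + 1) ^ 2 := by
  have : NeZero m := .of_pos hm
  rw [setOf_kron_isTransition, stmt4_general, Fintype.card_fin, Nat.mul_sub_one, ← sq, ← sq]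
end

section
/- Fix m ≥ 1. Let e ∈ ℝ^m be the all-ones vector and, for 1 ≤ j ≤ m − 1, let ε_j = e₁ − e_{j+1}, where e_i denotes the i-th standard basis vector of ℝ^m. Equip the space of m² × m² real matrices with the Frobenius inner product ⟨X, Y⟩ = Tr(Xᵀ Y). Then the orthogonal complement of the ℝ-linear span of { A ⊗ B : A, B m × m row-stochastic } equals the set of all matrices of the form ∑_{j=1}^{m−1} (ε_j eᵀ) ⊗ W_j¹ + ∑_{j=1}^{m−1} W_j² ⊗ (ε_j eᵀ), where W_j¹, W_j² range over arbitrary m × m real matrices. -/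
open Matrix

/-- `ε_j = e₁ − e_{j+1}` : first entry `1`, `(j+1)`-th entry `−1`, the rest `0`. -/
def eps (m : ℕ) (j : Fin (m - 1)) : Fin m → ℝ :=
  fun i => (if (i : ℕ) = 0 then 1 else 0) - (if (i : ℕ) = (j : ℕ) + 1 then 1 else 0)

/-- The rank-one matrix `ε_j eᵀ` (every column equal to `ε_j`). -/
def epsE (m : ℕ) (j : Fin (m - 1)) : Matrix (Fin m) (Fin m) ℝ :=
  Matrix.of fun i _ => eps m j i

/-! For `⊇`, `Tr((A ⊗ B)ᵀ (C ⊗ D)) = Tr(Aᵀ C) Tr(Bᵀ D)`, and `Tr(Aᵀ (ε_j eᵀ)) = 0` since `A e = e`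
and the entries of `ε_j` sum to zero.

For `⊆`, it is enough to test `Y` against the deterministic transition matrices `i ↦ f i`,
`j ↦ g j`, which says that `∑ i, ∑ j, Y (i, j) (f i, g j) = 0` for all `f` and `g`. Changing one
value of `f` and one value of `g` shows that the mixed differences of `Y (i, j) (k, l)` in `k` and
`l` vanish, so `Y (i, j) (k, l) = F i j l + G j i k`. Moving a function of `(i, j)` between `F` and
`G` arranges `∑ i, F i = 0` and `∑ j, G j = 0`, and the `ε_j` span the vectors of sum zero. -/

open scoped Kronecker

section Decomposition

theorem apply_eq_of_forall_sum_eq {ι M : Type*} {κ : ι → Type*} [Fintype ι] [∀ i, Nonempty (κ i)]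
    [AddCommMonoid M] [IsRightCancelAdd M] {φ : ∀ i, κ i → M} {c : M}
    (h : ∀ f : ∀ i, κ i, ∑ i, φ i (f i) = c) (i : ι) (k l : κ i) : φ i k = φ i l := by
  classical
  let f₀ : ∀ i, κ i := fun _ => Classical.arbitrary _
  have hsum (k : κ i) : φ i k + ∑ j ∈ Finset.univ.erase i, φ j (f₀ j) = c := by
    rw [← h (Function.update f₀ i k), ← Finset.add_sum_erase _ _ (Finset.mem_univ i),
      Function.update_self]
    refine congrArg _ (Finset.sum_congr rfl fun j hj => ?_)
    rw [Function.update_of_ne (Finset.ne_of_mem_erase hj)]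
  exact add_right_cancel ((hsum k).trans (hsum l).symm)

variable {ι κ ι' κ' M : Type*} [Fintype ι] [Fintype κ] [AddCommGroup M]
  {Y : Matrix (ι × κ) (ι' × κ') M}

theorem sum_apply_eq_of_forall_sum_eq_zero
    (h : ∀ (f : ι → ι') (g : κ → κ'), ∑ i, ∑ j, Y (i, j) (f i, g j) = 0)
    (g : κ → κ') (i : ι) (k k' : ι') :
    ∑ j, Y (i, j) (k, g j) = ∑ j, Y (i, j) (k', g j) :=
  have : Nonempty ι' := ⟨k⟩
  apply_eq_of_forall_sum_eq (φ := fun i k => ∑ j, Y (i, j) (k, g j)) (fun f => h f g) i k k'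

theorem sub_apply_eq_of_forall_sum_eq_zero
    (h : ∀ (f : ι → ι') (g : κ → κ'), ∑ i, ∑ j, Y (i, j) (f i, g j) = 0)
    (i : ι) (j : κ) (k k' : ι') (l l' : κ') :
    Y (i, j) (k, l) - Y (i, j) (k', l) = Y (i, j) (k, l') - Y (i, j) (k', l') :=
  have : Nonempty κ' := ⟨l⟩
  apply_eq_of_forall_sum_eq (φ := fun j l => Y (i, j) (k, l) - Y (i, j) (k', l))
    (fun g => by rw [Finset.sum_sub_distrib, sum_apply_eq_of_forall_sum_eq_zero h, sub_self]) j l l'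

theorem exists_sum_eq_zero_and_apply_eq_add
    (h : ∀ (f : ι → ι') (g : κ → κ'), ∑ i, ∑ j, Y (i, j) (f i, g j) = 0) :
    ∃ (F : ι → Matrix κ κ' M) (G : κ → Matrix ι ι' M), ∑ i, F i = 0 ∧ ∑ j, G j = 0 ∧
      ∀ i j k l, Y (i, j) (k, l) = F i j l + G j i k := by
  classical
  obtain hempty | ⟨⟨i₀, k₀, l₀⟩⟩ := isEmpty_or_nonempty (ι × ι' × κ')
  · exact ⟨0, 0, by simp, by simp, fun i _ k l => hempty.elim (i, k, l)⟩
  let c (j : κ) : M := ∑ i, Y (i, j) (k₀, l₀)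
  have hc : ∑ j, c j = 0 := by
    rw [Finset.sum_comm]
    exact h (fun _ => k₀) fun _ => l₀
  have hcol (j : κ) (l : κ') : ∑ i, Y (i, j) (k₀, l) = c j :=
    have : Nonempty κ' := ⟨l⟩
    apply_eq_of_forall_sum_eq (φ := fun j l => ∑ i, Y (i, j) (k₀, l))
      (fun g => by rw [Finset.sum_comm]; exact h (fun _ => k₀) g) j l l₀
  -- `F i j l = Y (i, j) (k₀, l)` works up to its column sums `c j`, which are moved into `G`.
  refine ⟨fun i => of fun j l => Y (i, j) (k₀, l) - (Pi.single i₀ (c j) : ι → M) i,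
    fun j => of fun i k => Y (i, j) (k, l₀) - Y (i, j) (k₀, l₀) + (Pi.single i₀ (c j) : ι → M) i,
    ?_, ?_, fun i j k l => ?_⟩
  · ext j l
    simp [Matrix.sum_apply, Finset.sum_sub_distrib, hcol]
  · ext i k
    have hrow := sum_apply_eq_of_forall_sum_eq_zero h (fun _ => l₀) i k k₀
    have hsingle : ∑ j, (Pi.single i₀ (c j) : ι → M) i = 0 := by
      simp only [Pi.single_apply]
      split_ifs <;> simp [hc]
    simp [Matrix.sum_apply, Finset.sum_add_distrib, Finset.sum_sub_distrib, hrow, hsingle]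
  · have hmixed := sub_apply_eq_of_forall_sum_eq_zero h i j k k₀ l l₀
    simp only [of_apply, ← hmixed]
    abel

end Decomposition

section Trace

variable {ι κ R : Type*} [Fintype ι] [Fintype κ]

theorem trace_transpose_mul_eq_zero_of_mem_span [CommSemiring R] {S : Set (Matrix ι κ R)}
    {Y X : Matrix ι κ R} (h : ∀ X ∈ S, (Xᵀ * Y).trace = 0) (hX : X ∈ Submodule.span R S) :
    (Xᵀ * Y).trace = 0 := by
  induction hX using Submodule.span_induction with
  | mem X hX => exact h X hX
  | zero => simp
  | add X X' _ _ hX hX' => rw [transpose_add, Matrix.add_mul, trace_add, hX, hX', add_zero]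
  | smul c X _ hX => rw [transpose_smul, Matrix.smul_mul, trace_smul, hX, smul_zero]

theorem trace_transpose_kron_mul_kron (A C : Matrix ι ι ℝ) (B D : Matrix κ κ ℝ) :
    ((kron A B)ᵀ * kron C D).trace = (Aᵀ * C).trace * (Bᵀ * D).trace := by
  change ((A ⊗ₖ B)ᵀ * C ⊗ₖ D).trace = _
  rw [← kroneckerMap_transpose, ← mul_kronecker_mul, trace_kronecker]

end Trace

section FunctionMatrix

variable {ι κ : Type*} [DecidableEq ι] [DecidableEq κ]

/-- The deterministic transition matrix that moves every state `i` to `f i`; these matrices are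
the extreme points among the row-stochastic ones. -/
def functionMatrix (f : ι → ι) : Matrix ι ι ℝ :=
  of fun i => Pi.single (f i) 1

theorem isTransition_functionMatrix [Fintype ι] (f : ι → ι) : IsTransition (functionMatrix f) :=
  ⟨fun i j => (Pi.single_nonneg.2 zero_le_one : (0 : ι → ℝ) ≤ Pi.single (f i) 1) j,
    fun i => by simp [functionMatrix]⟩

theorem kron_functionMatrix (f : ι → ι) (g : κ → κ) :
    kron (functionMatrix f) (functionMatrix g) = functionMatrix (Prod.map f g) := by
  ext ⟨i, j⟩ ⟨k, l⟩
  simp [kron, functionMatrix, Pi.single_apply, ← ite_and, and_comm]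

theorem trace_transpose_functionMatrix_mul [Fintype ι] (f : ι → ι) (Y : Matrix ι ι ℝ) :
    ((functionMatrix f)ᵀ * Y).trace = ∑ i, Y i (f i) := by
  simp only [trace, diag_apply, mul_apply, transpose_apply]
  rw [Finset.sum_comm]
  simp [functionMatrix, Pi.single_apply]

end FunctionMatrix

section Eps

theorem sum_eps (m : ℕ) (j : Fin (m - 1)) : ∑ i, eps m j i = 0 := by
  cases m with
  | zero => exact j.elim0
  | succ n =>
    rw [Fin.sum_univ_succ]
    simp [eps, Fin.val_inj]

theorem exists_eq_sum_eps_smul_of_sum_eq_zero {m : ℕ} {E : Type*} [AddCommGroup E] [Module ℝ E]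
    {v : Fin m → E} (hv : ∑ i, v i = 0) :
    ∃ w : Fin (m - 1) → E, ∀ i, v i = ∑ j, eps m j i • w j := by
  cases m with
  | zero => exact ⟨0, fun i => i.elim0⟩
  | succ n =>
    refine ⟨fun j => -v j.succ, fun i => ?_⟩
    rw [Fin.sum_univ_succ] at hv
    cases i using Fin.cases with
    | zero => simp [eps, eq_neg_of_add_eq_zero_left hv]
    | succ i => simp [eps, Fin.val_inj, ite_smul]

theorem IsTransition.trace_transpose_mul_epsE {m : ℕ} {A : Matrix (Fin m) (Fin m) ℝ}
    (hA : IsTransition A) (j : Fin (m - 1)) : (Aᵀ * epsE m j).trace = 0 := by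
  simp only [trace, diag_apply, mul_apply, transpose_apply, epsE, of_apply]
  rw [Finset.sum_comm]
  simp only [← Finset.sum_mul, hA.2, one_mul, sum_eps]

end Eps

section KronEpsE

variable {m n : ℕ}

theorem exists_eq_sum_kron_epsE_add_sum_kron_epsE
    {Y : Matrix (Fin m × Fin n) (Fin m × Fin n) ℝ}
    (h : ∀ (f : Fin m → Fin m) (g : Fin n → Fin n), ∑ i, ∑ j, Y (i, j) (f i, g j) = 0) :
    ∃ (W1 : Fin (m - 1) → Matrix (Fin n) (Fin n) ℝ) (W2 : Fin (n - 1) → Matrix (Fin m) (Fin m) ℝ),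
      Y = (∑ j, kron (epsE m j) (W1 j)) + ∑ j, kron (W2 j) (epsE n j) := by
  obtain ⟨F, G, hF, hG, hY⟩ := exists_sum_eq_zero_and_apply_eq_add h
  obtain ⟨W1, hW1⟩ := exists_eq_sum_eps_smul_of_sum_eq_zero hF
  obtain ⟨W2, hW2⟩ := exists_eq_sum_eps_smul_of_sum_eq_zero hG
  refine ⟨W1, W2, ?_⟩
  ext ⟨i, j⟩ ⟨k, l⟩
  simp [hY, hW1, hW2, Matrix.sum_apply, kron, epsE, mul_comm]

theorem trace_transpose_kron_mul_sum_kron_epsE_add_eq_zero {A : Matrix (Fin m) (Fin m) ℝ}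
    {B : Matrix (Fin n) (Fin n) ℝ} (hA : IsTransition A) (hB : IsTransition B)
    (W1 : Fin (m - 1) → Matrix (Fin n) (Fin n) ℝ) (W2 : Fin (n - 1) → Matrix (Fin m) (Fin m) ℝ) :
    ((kron A B)ᵀ * ((∑ j, kron (epsE m j) (W1 j)) + ∑ j, kron (W2 j) (epsE n j))).trace = 0 := by
  simp only [Matrix.mul_add, Matrix.mul_sum, trace_add, trace_sum, trace_transpose_kron_mul_kron,
    hA.trace_transpose_mul_epsE, hB.trace_transpose_mul_epsE, zero_mul, mul_zero,
    Finset.sum_const_zero, add_zero]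

end KronEpsE

theorem stmt5_general (m n : ℕ) :
    {Y : Matrix (Fin m × Fin n) (Fin m × Fin n) ℝ |
        ∀ X ∈ Submodule.span ℝ
            {M : Matrix (Fin m × Fin n) (Fin m × Fin n) ℝ |
              ∃ (A : Matrix (Fin m) (Fin m) ℝ) (B : Matrix (Fin n) (Fin n) ℝ),
                IsTransition A ∧ IsTransition B ∧ M = kron A B},
          (Xᵀ * Y).trace = 0}
      = {Y | ∃ (W1 : Fin (m - 1) → Matrix (Fin n) (Fin n) ℝ)
              (W2 : Fin (n - 1) → Matrix (Fin m) (Fin m) ℝ),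
            Y = (∑ j, kron (epsE m j) (W1 j)) + ∑ j, kron (W2 j) (epsE n j)} := by
  ext Y
  constructor
  · intro hY
    refine exists_eq_sum_kron_epsE_add_sum_kron_epsE fun f g => ?_
    have hfg : ((kron (functionMatrix f) (functionMatrix g))ᵀ * Y).trace = 0 :=
      hY _ (Submodule.subset_span ⟨_, _, isTransition_functionMatrix f,
        isTransition_functionMatrix g, rfl⟩)
    rwa [kron_functionMatrix, trace_transpose_functionMatrix_mul, Fintype.sum_prod_type] at hfg
  · rintro ⟨W1, W2, rfl⟩ X hX
    refine trace_transpose_mul_eq_zero_of_mem_span ?_ hX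
    rintro _ ⟨A, B, hA, hB, rfl⟩
    exact trace_transpose_kron_mul_sum_kron_epsE_add_eq_zero hA hB W1 W2

/-- The orthogonal complement (w.r.t. the Frobenius inner product `Tr(Xᵀ Y)`) of the span
of Kronecker products of row-stochastic matrices consists exactly of matrices of the form
`∑ⱼ (ε_j eᵀ) ⊗ W_j¹ + ∑ⱼ W_j² ⊗ (ε_j eᵀ)`. -/
theorem stmt5 (m : ℕ) (hm : 1 ≤ m) :
    {Y : Matrix (Fin m × Fin m) (Fin m × Fin m) ℝ |
        ∀ X ∈ Submodule.span ℝ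
            {M : Matrix (Fin m × Fin m) (Fin m × Fin m) ℝ |
              ∃ A B : Matrix (Fin m) (Fin m) ℝ,
                IsTransition A ∧ IsTransition B ∧ M = kron A B},
          (Xᵀ * Y).trace = 0}
      = {Y | ∃ W1 W2 : Fin (m - 1) → Matrix (Fin m) (Fin m) ℝ,
            Y = (∑ j, kron (epsE m j) (W1 j)) + ∑ j, kron (W2 j) (epsE m j)} := by
  exact stmt5_general m m
end

section
/- Let P be a transition matrix over a finite type ι and let γ ∈ [0,1). Then the matrix I − γP is invertible, its inverse (I − γP)^{-1} has all entries nonnegative, and the matrix (1 − γ)(I − γP)^{-1} is a transition matrix (in particular, each row of (I − γP)^{-1} sums to 1/(1 − γ)). -/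
open Matrix

/-!
The argument is a minimum principle rather than a Neumann series, so it needs no completeness.
A matrix with nonpositive off-diagonal entries and positive row sums, such as `1 - γ • P`, reflects
nonnegativity of vectors: if `v` is minimal at `k`, then `(M v) k` is at most `v k` times the `k`-th
row sum. Reflecting nonnegativity forces injectivity, hence invertibility, and applied to the
columns of the inverse it makes them nonnegative. The row sums of the inverse come from the
eigenvector equation `(1 - γ • P) 1 = (1 - γ) 1`.
-/

section MonotoneMatrix

variable {ι K : Type*} [Fintype ι] {M : Matrix ι ι K}

/-- Collatz's notion of a monotone matrix: a linear map reflecting nonnegativity of vectors.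
Over a linearly ordered field these are exactly the invertible matrices with entrywise nonnegative
inverse. Stated through `mulVec`, the notion makes sense before invertibility is known. -/
def IsMonotoneMatrix [NonUnitalNonAssocSemiring K] [LE K] (M : Matrix ι ι K) : Prop :=
  ∀ v : ι → K, 0 ≤ M *ᵥ v → 0 ≤ v

theorem isMonotoneMatrix_of_offDiag_nonpos_of_sum_row_pos
    [Ring K] [LinearOrder K] [IsStrictOrderedRing K]
    (hoff : Pairwise fun i j ↦ M i j ≤ 0) (hrow : ∀ i, 0 < ∑ j, M i j) :
    IsMonotoneMatrix M := by
  intro v hMv i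
  have : Nonempty ι := ⟨i⟩
  obtain ⟨k, hk⟩ := Finite.exists_min v
  have hentry (j : ι) : M k j * v j ≤ M k j * v k := by
    obtain rfl | hkj := eq_or_ne k j
    · exact le_rfl
    · exact mul_le_mul_of_nonpos_left (hk j) (hoff hkj)
  have hrow_mul : 0 ≤ (∑ j, M k j) * v k :=
    calc
      0 ≤ ∑ j, M k j * v j := hMv k
      _ ≤ ∑ j, M k j * v k := Finset.sum_le_sum fun j _ ↦ hentry j
      _ = (∑ j, M k j) * v k := (Finset.sum_mul ..).symm
  exact (nonneg_of_mul_nonneg_right hrow_mul (hrow k)).trans (hk i)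

theorem isMonotoneMatrix_one_sub_of_nonneg_of_sum_row_lt_one [DecidableEq ι]
    [Ring K] [LinearOrder K] [IsStrictOrderedRing K]
    (hM : ∀ i j, 0 ≤ M i j) (hrow : ∀ i, ∑ j, M i j < 1) : IsMonotoneMatrix (1 - M) := by
  refine isMonotoneMatrix_of_offDiag_nonpos_of_sum_row_pos (fun i j hij ↦ ?_) (fun i ↦ ?_)
  · simpa [one_apply_ne hij] using hM i j
  · simpa [one_apply] using hrow i

namespace IsMonotoneMatrix

theorem mulVec_injective [NonUnitalNonAssocRing K] [PartialOrder K] [IsOrderedAddMonoid K]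
    (hM : IsMonotoneMatrix M) : Function.Injective M.mulVec := by
  have hle {v w : ι → K} (h : M *ᵥ v = M *ᵥ w) : w ≤ v :=
    sub_nonneg.1 <| hM _ <| by rw [mulVec_sub, h, sub_self]
  exact fun v w h ↦ le_antisymm (hle h.symm) (hle h)

variable [DecidableEq ι]

theorem isUnit [Field K] [PartialOrder K] [IsOrderedAddMonoid K] (hM : IsMonotoneMatrix M) :
    IsUnit M :=
  mulVec_injective_iff_isUnit.1 hM.mulVec_injective

theorem inv_nonneg [CommRing K] [PartialOrder K] [ZeroLEOneClass K]
    (hM : IsMonotoneMatrix M) (hunit : IsUnit M) (i j : ι) : 0 ≤ M⁻¹ i j := by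
  have hcol : 0 ≤ M⁻¹ *ᵥ Pi.single j 1 := hM _ <| by
    rw [mulVec_mulVec, mul_nonsing_inv _ ((isUnit_iff_isUnit_det M).1 hunit), one_mulVec]
    exact Pi.single_nonneg.2 zero_le_one
  rw [mulVec_single_one] at hcol
  exact hcol i

end IsMonotoneMatrix

end MonotoneMatrix

section Eigenvector

variable {ι K : Type*} [Fintype ι] [DecidableEq ι] {v : ι → K}

theorem one_sub_smul_mulVec_of_mulVec_eq [Ring K] {P : Matrix ι ι K} (hv : P *ᵥ v = v) (γ : K) :
    (1 - γ • P) *ᵥ v = (1 - γ) • v := by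
  rw [sub_mulVec, one_mulVec, smul_mulVec, hv, sub_smul, one_smul]

theorem inv_mulVec_eq_inv_smul_of_mulVec_eq_smul [Field K] {M : Matrix ι ι K} (hM : IsUnit M)
    {c : K} (hc : c ≠ 0) (hv : M *ᵥ v = c • v) : M⁻¹ *ᵥ v = c⁻¹ • v := by
  rw [eq_inv_smul_iff₀ hc, ← mulVec_smul, ← hv, mulVec_mulVec,
    nonsing_inv_mul _ ((isUnit_iff_isUnit_det M).1 hM), one_mulVec]

end Eigenvector

section RowStochastic

variable {ι K : Type*} [Fintype ι] [DecidableEq ι]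

theorem isTransition_iff_mem_rowStochastic {P : Matrix ι ι ℝ} :
    IsTransition P ↔ P ∈ rowStochastic ℝ ι :=
  mem_rowStochastic_iff_sum.symm

theorem isMonotoneMatrix_one_sub_smul_of_mem_rowStochastic
    [Ring K] [LinearOrder K] [IsStrictOrderedRing K]
    {P : Matrix ι ι K} (hP : P ∈ rowStochastic K ι) {γ : K} (hγ0 : 0 ≤ γ) (hγ1 : γ < 1) :
    IsMonotoneMatrix (1 - γ • P) := by
  refine isMonotoneMatrix_one_sub_of_nonneg_of_sum_row_lt_one (fun i j ↦ ?_) (fun i ↦ ?_)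
  · exact mul_nonneg hγ0 (nonneg_of_mem_rowStochastic hP)
  · have hsum : ∑ j, (γ • P) i j = γ := by
      simp only [Matrix.smul_apply, smul_eq_mul, ← Finset.mul_sum,
        sum_row_of_mem_rowStochastic hP, mul_one]
    rwa [hsum]

theorem stmt6_general [Field K] [LinearOrder K] [IsStrictOrderedRing K]
    {P : Matrix ι ι K} (hP : P ∈ rowStochastic K ι) {γ : K} (hγ0 : 0 ≤ γ) (hγ1 : γ < 1) :
    IsUnit (1 - γ • P) ∧
    (∀ i j, 0 ≤ (1 - γ • P)⁻¹ i j) ∧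
    (1 - γ) • (1 - γ • P)⁻¹ ∈ rowStochastic K ι ∧
    ∀ i, ∑ j, (1 - γ • P)⁻¹ i j = 1 / (1 - γ) := by
  have hpos : 0 < 1 - γ := sub_pos.2 hγ1
  have hmono : IsMonotoneMatrix (1 - γ • P) :=
    isMonotoneMatrix_one_sub_smul_of_mem_rowStochastic hP hγ0 hγ1
  have hnonneg := hmono.inv_nonneg hmono.isUnit
  have hone : (1 - γ • P)⁻¹ *ᵥ 1 = (1 - γ)⁻¹ • (1 : ι → K) :=
    inv_mulVec_eq_inv_smul_of_mulVec_eq_smul hmono.isUnit hpos.ne' <|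
      one_sub_smul_mulVec_of_mulVec_eq (one_vecMul_of_mem_rowStochastic hP) γ
  refine ⟨hmono.isUnit, hnonneg, mem_rowStochastic.2 ⟨fun i j ↦ ?_, ?_⟩, fun i ↦ ?_⟩
  · exact mul_nonneg hpos.le (hnonneg i j)
  · rw [smul_mulVec, hone, smul_inv_smul₀ hpos.ne']
  · simpa [mulVec, dotProduct] using congrFun hone i

end RowStochastic

/-- For a transition matrix `P` and `γ ∈ [0,1)`: `I − γP` is invertible, its inverse is
entrywise nonnegative, `(1 − γ)(I − γP)⁻¹` is a transition matrix, and each row of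
`(I − γP)⁻¹` sums to `1/(1 − γ)`. -/
theorem stmt6 {ι : Type*} [Fintype ι] [DecidableEq ι]
    (P : Matrix ι ι ℝ) (hP : IsTransition P)
    (γ : ℝ) (hγ0 : 0 ≤ γ) (hγ1 : γ < 1) :
    IsUnit (1 - γ • P) ∧
    (∀ i j, 0 ≤ (1 - γ • P)⁻¹ i j) ∧
    IsTransition ((1 - γ) • (1 - γ • P)⁻¹) ∧
    ∀ i, ∑ j, (1 - γ • P)⁻¹ i j = 1 / (1 - γ) := by
  rw [isTransition_iff_mem_rowStochastic] at hP ⊢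
  exact stmt6_general hP hγ0 hγ1
end

section
/- Let α and β be finite nonempty types, P a transition matrix over α × β, and γ ∈ (0,1). Suppose there exist functions Q_A : (α → ℝ) → (α → ℝ) and Q_B : (β → ℝ) → (β → ℝ) such that for every r_A : α → ℝ and every r_B : β → ℝ, (I − γP)^{-1}(r_A ⊗ e + e ⊗ r_B) = Q_A(r_A) ⊗ e + e ⊗ Q_B(r_B). Then P is separable: there exist a finite index set K, reals x_j with ∑_{j∈K} x_j = 1, transition matrices A_j over α and B_j over β, such that P = ∑_{j∈K} x_j (A_j ⊗ B_j). -/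
open Matrix

/-! A reward depending on one factor only has a value function depending on that factor only,
because the other summand of the decomposition does not see the reward and is therefore constant.
So `(1 - γP)⁻¹` preserves the functions of `a`, and the functions of `b`; in finite dimension its
inverse `1 - γP` does too, hence so does `P`. This says that `P` is lumpable onto either factor,
with lumped matrices `A` and `B` of row sums one, which are affine combinations of transition
matrices. The difference `P - A ⊗ B` has vanishing marginals on both factors, so it is a
combination of matrices `(single i j 1 - single i i 1) ⊗ (single k l 1 - single k k 1)`. Each factor
is a difference of two transition matrices, and expanding the product leaves Kronecker products of
transition matrices with coefficients `1, -1, -1, 1`, whose sum is zero. -/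

section AffineSpan

theorem exists_fin_sum_smul_of_mem_affineSpan {k E : Type*} [Ring k] [AddCommGroup E]
    [Module k E] {s : Set E} {x : E} (hx : x ∈ affineSpan k s) :
    ∃ (n : ℕ) (w : Fin n → k) (v : Fin n → E),
      ∑ i, w i = 1 ∧ (∀ i, v i ∈ s) ∧ x = ∑ i, w i • v i := by
  rw [← Subtype.range_coe (s := s)] at hx
  obtain ⟨u, w, hw, rfl⟩ := eq_affineCombination_of_mem_affineSpan hx
  let e := u.equivFin.symm
  refine ⟨u.card, fun i => w (e i), fun i => (e i : s), ?_, fun i => (e i : s).2, ?_⟩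
  · rw [e.sum_comp fun i : u => w i, u.sum_coe_sort w, hw]
  · rw [u.affineCombination_eq_linear_combination _ _ hw, e.sum_comp fun i : u => w i • (i : s).1,
      u.sum_coe_sort fun i : s => w i • i.1]

variable {k E F G : Type*} [CommRing k] [AddCommGroup E] [Module k E] [AddCommGroup F] [Module k F]
  [AddCommGroup G] [Module k G] {s : Set E} {t : Set F}

theorem bilin_mem_affineSpan_image2 (f : E →ₗ[k] F →ₗ[k] G) {x : E} {y : F}
    (hx : x ∈ affineSpan k s) (hy : y ∈ affineSpan k t) :
    f x y ∈ affineSpan k (Set.image2 (fun a b => f a b) s t) := by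
  set S := affineSpan k (Set.image2 (fun a b => f a b) s t)
  have left_mem (a : E) (ha : a ∈ s) : f a y ∈ S :=
    have hsub : t ⊆ S.comap (f a).toAffineMap :=
      fun b hb => subset_affineSpan k _ ⟨a, ha, b, hb, rfl⟩
    affineSpan_le.2 hsub hy
  have hsub : s ⊆ S.comap (f.flip y).toAffineMap := left_mem
  exact affineSpan_le.2 hsub hx

theorem bilin_mem_vectorSpan_image2 (f : E →ₗ[k] F →ₗ[k] G) {u : E} {v : F}
    (hu : u ∈ vectorSpan k s) (hv : v ∈ vectorSpan k t) :
    f u v ∈ vectorSpan k (Set.image2 (fun a b => f a b) s t) := by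
  suffices h : Submodule.map₂ f (vectorSpan k s) (vectorSpan k t) ≤ _ from
    h (Submodule.apply_mem_map₂ f hu hv)
  rw [vectorSpan_def k s, vectorSpan_def k t, Submodule.map₂_span_span, Submodule.span_le]
  rintro _ ⟨_, ⟨a, ha, a', ha', rfl⟩, _, ⟨b, hb, b', hb', rfl⟩, rfl⟩
  have sub_mem_span (c : E) (hc : c ∈ s) :
      f c b - f c b' ∈ vectorSpan k (Set.image2 (fun a b => f a b) s t) :=
    vsub_mem_vectorSpan k ⟨c, hc, b, hb, rfl⟩ ⟨c, hc, b', hb', rfl⟩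
  simpa using sub_mem (sub_mem_span a ha) (sub_mem_span a' ha')

end AffineSpan

section Transition

variable {ι : Type*} [Fintype ι]

theorem isTransition_one [DecidableEq ι] : IsTransition (1 : Matrix ι ι ℝ) :=
  mem_rowStochastic_iff_sum.1 (one_mem (rowStochastic ℝ ι))

theorem IsTransition.updateRow_single [DecidableEq ι] {A : Matrix ι ι ℝ} (hA : IsTransition A)
    (i j : ι) : IsTransition (A.updateRow i (Pi.single j 1)) := by
  constructor
  · intro k l
    rw [updateRow_apply]
    split_ifs
    · exact (Pi.single_nonneg (α := fun _ : ι => ℝ)).2 zero_le_one l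
    · exact hA.1 k l
  · intro k
    obtain rfl | hk := eq_or_ne k i
    · simp
    · simpa [updateRow_ne hk] using hA.2 k

theorem single_sub_single_mem_vectorSpan_isTransition [DecidableEq ι] (i j : ι) :
    single i j 1 - single i i 1 ∈ vectorSpan ℝ {A : Matrix ι ι ℝ | IsTransition A} := by
  have h : single i j 1 - single i i 1 = (1 : Matrix ι ι ℝ).updateRow i (Pi.single j 1) - 1 := by
    ext k l
    obtain rfl | hk := eq_or_ne k i
    · simp [single_apply, one_apply, Pi.single_apply, eq_comm]
    · simp [updateRow_ne hk, single_apply_of_row_ne hk.symm]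
  rw [h]
  exact vsub_mem_vectorSpan ℝ (isTransition_one.updateRow_single i j) isTransition_one

theorem mem_vectorSpan_isTransition {E : Matrix ι ι ℝ} (hE : ∀ i, ∑ j, E i j = 0) :
    E ∈ vectorSpan ℝ {A : Matrix ι ι ℝ | IsTransition A} := by
  classical
  have h : E = ∑ i, ∑ j, E i j • (single i j 1 - single i i 1) := by
    simp only [smul_sub, Finset.sum_sub_distrib, ← Finset.sum_smul, hE, zero_smul,
      sub_zero]
    simpa only [smul_single, smul_eq_mul, mul_one] using matrix_eq_sum_single E
  rw [h]
  exact sum_mem fun i _ => sum_mem fun j _ =>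
    Submodule.smul_mem _ _ (single_sub_single_mem_vectorSpan_isTransition i j)

theorem mem_affineSpan_isTransition {A : Matrix ι ι ℝ} (hA : ∀ i, ∑ j, A i j = 1) :
    A ∈ affineSpan ℝ {A : Matrix ι ι ℝ | IsTransition A} := by
  classical
  have hA_sub : A - 1 ∈ vectorSpan ℝ {A : Matrix ι ι ℝ | IsTransition A} :=
    mem_vectorSpan_isTransition fun i => by
      simp [Finset.sum_sub_distrib, hA, isTransition_one.2]
  have one_mem : (1 : Matrix ι ι ℝ) ∈ affineSpan ℝ {A : Matrix ι ι ℝ | IsTransition A} :=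
    subset_affineSpan ℝ _ isTransition_one
  rw [← sub_add_cancel A 1]
  exact vadd_mem_affineSpan_of_mem_affineSpan_of_mem_vectorSpan one_mem hA_sub

theorem IsTransition.isUnit_det_one_sub_smul [DecidableEq ι] {P : Matrix ι ι ℝ}
    (hP : IsTransition P) {γ : ℝ} (hγ : |γ| < 1) : IsUnit (1 - γ • P).det := by
  refine isUnit_iff_ne_zero.2 (det_ne_zero_of_sum_row_lt_diag fun i => ?_)
  have row_sum : P i i + ∑ j ∈ Finset.univ.erase i, P i j = 1 := by
    rw [Finset.add_sum_erase _ _ (Finset.mem_univ i), hP.2 i]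
  calc ∑ j ∈ Finset.univ.erase i, ‖(1 - γ • P) i j‖
      = |γ| * ∑ j ∈ Finset.univ.erase i, P i j := by
        rw [Finset.mul_sum]
        refine Finset.sum_congr rfl fun j hj => ?_
        simp [one_apply_ne (Finset.ne_of_mem_erase hj).symm, abs_of_nonneg (hP.1 i j)]
    _ < 1 - |γ| * P i i := by
        rw [← eq_sub_iff_add_eq'] at row_sum
        rw [row_sum]
        linarith
    _ ≤ 1 - γ * P i i := by
        gcongr
        · exact hP.1 i i
        · exact le_abs_self γ
    _ ≤ ‖(1 - γ • P) i i‖ := by simpa using le_abs_self (1 - γ * P i i)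

end Transition

section Lumping

variable {R σ τ : Type*} [CommSemiring R] [Fintype σ] [Fintype τ]

/-- Lumpability in the sense of Kemeny and Snell: merging the states `σ` along `π` turns `P` into
the matrix `A` on `τ`. It is encoded by the action on functions, so that `P` and `A` need not be
transition matrices. -/
def IsLumping (π : σ → τ) (P : Matrix σ σ R) (A : Matrix τ τ R) : Prop :=
  ∀ v : τ → R, P *ᵥ (v ∘ π) = (A *ᵥ v) ∘ π

theorem exists_isLumping {π : σ → τ} {P : Matrix σ σ R}
    (hπ : π.Surjective) (hP : ∀ v : τ → R, ∃ w : τ → R, P *ᵥ (v ∘ π) = w ∘ π) :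
    ∃ A, IsLumping π P A := by
  classical
  let g := Function.surjInv hπ
  let L : (τ → R) →ₗ[R] (τ → R) :=
    LinearMap.funLeft R R g ∘ₗ P.mulVecLin ∘ₗ LinearMap.funLeft R R π
  refine ⟨L.toMatrix', fun v => ?_⟩
  obtain ⟨w, hw⟩ := hP v
  have hg : w ∘ π ∘ g = w := by rw [(Function.rightInverse_surjInv hπ).id, Function.comp_id]
  rw [LinearMap.toMatrix'_mulVec]
  change P *ᵥ (v ∘ π) = (P *ᵥ (v ∘ π)) ∘ g ∘ π
  rw [hw, ← Function.comp_assoc, Function.comp_assoc w, hg]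

theorem IsLumping.sum_row {π : σ → τ} {P : Matrix σ σ R} {A : Matrix τ τ R}
    (h : IsLumping π P A) (hπ : π.Surjective) (hP : ∀ i, ∑ j, P i j = 1) (t : τ) :
    ∑ t', A t t' = 1 := by
  obtain ⟨i, rfl⟩ := hπ t
  simpa [mulVec, dotProduct, hP, eq_comm] using congrFun (h 1) i

theorem IsLumping.sum_fst {P : Matrix (σ × τ) (σ × τ) R}
    {A : Matrix σ σ R} (h : IsLumping Prod.fst P A) (p : σ × τ) (a : σ) :
    ∑ b, P p (a, b) = A p.1 a := by
  classical
  simpa [mulVec, dotProduct, Fintype.sum_prod_type_right, Pi.single_apply]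
    using congrFun (h (Pi.single a 1)) p

theorem IsLumping.sum_snd {P : Matrix (σ × τ) (σ × τ) R}
    {B : Matrix τ τ R} (h : IsLumping Prod.snd P B) (p : σ × τ) (b : τ) :
    ∑ a, P p (a, b) = B p.2 b := by
  classical
  simpa [mulVec, dotProduct, Fintype.sum_prod_type, Pi.single_apply]
    using congrFun (h (Pi.single b 1)) p

end Lumping

section Resolvent

variable {K σ τ : Type*} [Field K] [Fintype σ] [DecidableEq σ] [Fintype τ]

theorem inv_mulVec_mem {M : Matrix σ σ K} (hM : IsUnit M.det) {W : Submodule K (σ → K)}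
    (hW : ∀ v ∈ W, M *ᵥ v ∈ W) {v : σ → K} (hv : v ∈ W) : M⁻¹ *ᵥ v ∈ W := by
  have inj : Set.InjOn M.mulVecLin W :=
    (mulVec_injective_of_isUnit (M.isUnit_iff_isUnit_det.2 hM)).injOn
  obtain ⟨w, hw, rfl⟩ := (LinearMap.injOn_iff_surjOn hW).1 inj hv
  rwa [mulVecLin_apply, mulVec_mulVec, nonsing_inv_mul _ hM, one_mulVec]

theorem mulVec_mem_of_inv_one_sub_smul_mulVec_mem {P : Matrix σ σ K} {γ : K} (hγ : γ ≠ 0)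
    (hdet : IsUnit (1 - γ • P).det) {W : Submodule K (σ → K)}
    (hW : ∀ v ∈ W, (1 - γ • P)⁻¹ *ᵥ v ∈ W) {v : σ → K} (hv : v ∈ W) : P *ᵥ v ∈ W := by
  have hmem : (1 - γ • P) *ᵥ v ∈ W := by
    simpa only [nonsing_inv_nonsing_inv _ hdet] using
      inv_mulVec_mem (isUnit_nonsing_inv_det _ hdet) hW hv
  have hPv : P *ᵥ v = γ⁻¹ • (v - (1 - γ • P) *ᵥ v) := by
    rw [sub_mulVec, one_mulVec, smul_mulVec, sub_sub_cancel, inv_smul_smul₀ hγ]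
  rw [hPv]
  exact W.smul_mem _ (W.sub_mem hv hmem)

theorem exists_isLumping_of_inv_one_sub_smul {π : σ → τ} {P : Matrix σ σ K} {γ : K}
    (hπ : π.Surjective) (hγ : γ ≠ 0) (hdet : IsUnit (1 - γ • P).det)
    (h : ∀ v : τ → K, ∃ w : τ → K, (1 - γ • P)⁻¹ *ᵥ (v ∘ π) = w ∘ π) :
    ∃ A, IsLumping π P A := by
  have hW : ∀ u ∈ (LinearMap.funLeft K K π).range,
      (1 - γ • P)⁻¹ *ᵥ u ∈ (LinearMap.funLeft K K π).range := by
    rintro _ ⟨v, rfl⟩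
    obtain ⟨w, hw⟩ := h v
    exact ⟨w, hw.symm⟩
  refine exists_isLumping hπ fun v => ?_
  obtain ⟨w, hw⟩ := mulVec_mem_of_inv_one_sub_smul_mulVec_mem hγ hdet hW ⟨v, rfl⟩
  exact ⟨w, hw.symm⟩

end Resolvent

section Separable

variable {α β : Type*}

/-- The Kronecker product `kron` as a bilinear map, through which affine combinations in the two
factors are combined. -/
def kronBilinear (α β : Type*) :
    Matrix α α ℝ →ₗ[ℝ] Matrix β β ℝ →ₗ[ℝ] Matrix (α × β) (α × β) ℝ :=
  kroneckerBilinear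

theorem kron_eq_kronBilinear : kron = fun A B => kronBilinear α β A B := rfl

theorem kron_single_sub_single [DecidableEq α] [DecidableEq β] (p q : α × β) :
    kron (single p.1 q.1 1 - single p.1 p.1 1) (single p.2 q.2 1 - single p.2 p.2 1) =
      single p q 1 - single p (q.1, p.2) 1 - (single p (p.1, q.2) 1 - single p p 1) := by
  have kron_single (a a' : α) (b b' : β) :
      kronBilinear α β (single a a' (1 : ℝ)) (single b b' (1 : ℝ)) =
        single (a, b) (a', b') 1 :=
    (single_kronecker_single a a' b b' 1 1).trans (by rw [mul_one])
  simp only [kron_eq_kronBilinear, map_sub, LinearMap.sub_apply, kron_single]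
  abel

variable [Fintype α] [Fintype β]

/-- Separability of a matrix over `α × β`: it is an affine combination, with weights of either
sign, of Kronecker products of transition matrices. -/
def IsKronSeparable (P : Matrix (α × β) (α × β) ℝ) : Prop :=
  P ∈ affineSpan ℝ (Set.image2 kron {A : Matrix α α ℝ | IsTransition A}
    {B : Matrix β β ℝ | IsTransition B})

theorem IsKronSeparable.exists_sum_smul_kron {P : Matrix (α × β) (α × β) ℝ}
    (hP : IsKronSeparable P) :
    ∃ (K : ℕ) (x : Fin K → ℝ) (A : Fin K → Matrix α α ℝ) (B : Fin K → Matrix β β ℝ),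
      (∑ j, x j = 1) ∧ (∀ j, IsTransition (A j)) ∧ (∀ j, IsTransition (B j)) ∧
      P = ∑ j, x j • kron (A j) (B j) := by
  obtain ⟨K, x, M, hx, hM, rfl⟩ := exists_fin_sum_smul_of_mem_affineSpan hP
  choose A hA B hB hAB using hM
  exact ⟨K, x, A, B, hx, hA, hB, by simp only [hAB]⟩

theorem isKronSeparable_kron {A : Matrix α α ℝ} {B : Matrix β β ℝ} (hA : ∀ a, ∑ a', A a a' = 1)
    (hB : ∀ b, ∑ b', B b b' = 1) : IsKronSeparable (kron A B) := by
  rw [IsKronSeparable, kron_eq_kronBilinear]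
  exact bilin_mem_affineSpan_image2 (kronBilinear α β) (mem_affineSpan_isTransition hA)
    (mem_affineSpan_isTransition hB)

theorem eq_sum_smul_kron_single_sub_single [DecidableEq α] [DecidableEq β]
    {D : Matrix (α × β) (α × β) ℝ} (hα : ∀ p a, ∑ b, D p (a, b) = 0)
    (hβ : ∀ p b, ∑ a, D p (a, b) = 0) :
    D = ∑ p, ∑ q, D p q • kron (single p.1 q.1 1 - single p.1 p.1 1)
      (single p.2 q.2 1 - single p.2 p.2 1) := by
  have sum_fst (p : α × β) (M : α → Matrix (α × β) (α × β) ℝ) : ∑ q, D p q • M q.1 = 0 := by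
    simp only [Fintype.sum_prod_type, ← Finset.sum_smul, hα, zero_smul, Finset.sum_const_zero]
  have sum_snd (p : α × β) (M : β → Matrix (α × β) (α × β) ℝ) : ∑ q, D p q • M q.2 = 0 := by
    simp only [Fintype.sum_prod_type_right, ← Finset.sum_smul, hβ, zero_smul,
      Finset.sum_const_zero]
  have sum_q (p : α × β) : ∑ q, D p q • kron (single p.1 q.1 1 - single p.1 p.1 1)
      (single p.2 q.2 1 - single p.2 p.2 1) = ∑ q, single p q (D p q) := by
    simp only [kron_single_sub_single, smul_sub, Finset.sum_sub_distrib,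
      sum_fst p fun a => single p (a, p.2) 1, sum_snd p fun b => single p (p.1, b) 1,
      sum_fst p fun _ => single p p 1, sub_zero]
    simp only [smul_single, smul_eq_mul, mul_one]
  simpa only [sum_q] using matrix_eq_sum_single D

theorem mem_vectorSpan_kron_of_marginals_eq_zero {D : Matrix (α × β) (α × β) ℝ}
    (hα : ∀ p a, ∑ b, D p (a, b) = 0) (hβ : ∀ p b, ∑ a, D p (a, b) = 0) :
    D ∈ vectorSpan ℝ (Set.image2 kron {A : Matrix α α ℝ | IsTransition A}
      {B : Matrix β β ℝ | IsTransition B}) := by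
  classical
  rw [eq_sum_smul_kron_single_sub_single hα hβ, kron_eq_kronBilinear]
  exact sum_mem fun p _ => sum_mem fun q _ => Submodule.smul_mem _ _ <|
    bilin_mem_vectorSpan_image2 (kronBilinear α β)
      (single_sub_single_mem_vectorSpan_isTransition p.1 q.1)
      (single_sub_single_mem_vectorSpan_isTransition p.2 q.2)

theorem IsLumping.isKronSeparable {P : Matrix (α × β) (α × β) ℝ} {A : Matrix α α ℝ}
    {B : Matrix β β ℝ} (hPA : IsLumping Prod.fst P A) (hPB : IsLumping Prod.snd P B)
    (hA : ∀ a, ∑ a', A a a' = 1) (hB : ∀ b, ∑ b', B b b' = 1) : IsKronSeparable P := by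
  have hD := mem_vectorSpan_kron_of_marginals_eq_zero (D := P - kron A B)
    (fun p a => by simp [kron, Finset.sum_sub_distrib, hPA.sum_fst, ← Finset.mul_sum, hB])
    (fun p b => by simp [kron, Finset.sum_sub_distrib, hPB.sum_snd, ← Finset.sum_mul, hA])
  rw [← sub_add_cancel P (kron A B)]
  exact vadd_mem_affineSpan_of_mem_affineSpan_of_mem_vectorSpan (isKronSeparable_kron hA hB) hD

end Separable

section Decomposition

variable {R α β : Type*} [CommRing R] [Fintype α] [Fintype β] {M : Matrix (α × β) (α × β) R}
  {QA : (α → R) → α → R} {QB : (β → R) → β → R}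

theorem decomposition_zero_add_zero
    (h : ∀ rA rB, M *ᵥ (fun p => rA p.1 + rB p.2) = fun p => QA rA p.1 + QB rB p.2)
    (a : α) (b : β) : QA 0 a + QB 0 b = 0 := by
  simpa [mulVec, dotProduct, eq_comm] using congrFun (h 0 0) (a, b)

theorem exists_mulVec_comp_fst_of_decomposition
    (h : ∀ rA rB, M *ᵥ (fun p => rA p.1 + rB p.2) = fun p => QA rA p.1 + QB rB p.2) (v : α → R) :
    ∃ w : α → R, M *ᵥ (v ∘ Prod.fst) = w ∘ Prod.fst := by
  refine ⟨QA v - QA 0, ?_⟩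
  have hv : v ∘ Prod.fst = fun p : α × β => v p.1 + (0 : β → R) p.2 := by ext; simp
  rw [hv, h]
  ext p
  simp only [Function.comp_apply, Pi.sub_apply]
  linear_combination decomposition_zero_add_zero h p.1 p.2

theorem exists_mulVec_comp_snd_of_decomposition
    (h : ∀ rA rB, M *ᵥ (fun p => rA p.1 + rB p.2) = fun p => QA rA p.1 + QB rB p.2) (v : β → R) :
    ∃ w : β → R, M *ᵥ (v ∘ Prod.snd) = w ∘ Prod.snd := by
  refine ⟨QB v - QB 0, ?_⟩
  have hv : v ∘ Prod.snd = fun p : α × β => (0 : α → R) p.1 + v p.2 := by ext; simp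
  rw [hv, h]
  ext p
  simp only [Function.comp_apply, Pi.sub_apply]
  linear_combination decomposition_zero_add_zero h p.1 p.2

end Decomposition

theorem stmt9_general {α β : Type*} [Fintype α] [Fintype β] [Nonempty α] [Nonempty β]
    [DecidableEq α] [DecidableEq β]
    (P : Matrix (α × β) (α × β) ℝ) (hP : ∀ p, ∑ q, P p q = 1)
    (γ : ℝ) (hγ : γ ≠ 0) (hdet : IsUnit (1 - γ • P).det)
    (QA : (α → ℝ) → α → ℝ) (QB : (β → ℝ) → β → ℝ)
    (hdec : ∀ (rA : α → ℝ) (rB : β → ℝ),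
      ((1 - γ • P)⁻¹).mulVec (fun p => rA p.1 + rB p.2)
        = fun p => QA rA p.1 + QB rB p.2) :
    ∃ (K : ℕ) (x : Fin K → ℝ) (A : Fin K → Matrix α α ℝ) (B : Fin K → Matrix β β ℝ),
      (∑ j, x j = 1) ∧ (∀ j, IsTransition (A j)) ∧ (∀ j, IsTransition (B j)) ∧
      P = ∑ j, x j • kron (A j) (B j) := by
  have hdec_fst := exists_mulVec_comp_fst_of_decomposition hdec
  have hdec_snd := exists_mulVec_comp_snd_of_decomposition hdec
  obtain ⟨A, hA⟩ := exists_isLumping_of_inv_one_sub_smul Prod.fst_surjective hγ hdet hdec_fst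
  obtain ⟨B, hB⟩ := exists_isLumping_of_inv_one_sub_smul Prod.snd_surjective hγ hdet hdec_snd
  have hA_sum := hA.sum_row Prod.fst_surjective hP
  have hB_sum := hB.sum_row Prod.snd_surjective hP
  exact (hA.isKronSeparable hB hA_sum hB_sum).exists_sum_smul_kron

/-- Necessity: if the Q-value decomposes under every pair of rewards via some local
functions `Q_A`, `Q_B`, then `P` must be separable. -/
theorem stmt9 {α β : Type*} [Fintype α] [Fintype β] [Nonempty α] [Nonempty β]
    [DecidableEq α] [DecidableEq β]
    (P : Matrix (α × β) (α × β) ℝ) (hP : IsTransition P)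
    (γ : ℝ) (hγ0 : 0 < γ) (hγ1 : γ < 1)
    (QA : (α → ℝ) → α → ℝ) (QB : (β → ℝ) → β → ℝ)
    (hdec : ∀ (rA : α → ℝ) (rB : β → ℝ),
      ((1 - γ • P)⁻¹).mulVec (fun p => rA p.1 + rB p.2)
        = fun p => QA rA p.1 + QB rB p.2) :
    ∃ (K : ℕ) (x : Fin K → ℝ) (A : Fin K → Matrix α α ℝ) (B : Fin K → Matrix β β ℝ),
      (∑ j, x j = 1) ∧ (∀ j, IsTransition (A j)) ∧ (∀ j, IsTransition (B j)) ∧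
      P = ∑ j, x j • kron (A j) (B j) := by
  have hdet := hP.isUnit_det_one_sub_smul (abs_lt.2 ⟨by linarith, hγ1⟩)
  exact stmt9_general P hP.2 γ hγ0.ne' hdet QA QB hdec
end

section
/- Let α and β be finite types, P a transition matrix over α × β with strictly positive stationary probability vector μ, and γ ∈ [0,1). Let r_A : α → ℝ and r_B : β → ℝ satisfy ‖r_A‖_∞ ≤ R_A and ‖r_B‖_∞ ≤ R_B. Suppose there exist a finite index set K, reals x_j with ∑_{j∈K} x_j = 1, transition matrices A_j over α and B_j over β, such that the matrix S = ∑_{j∈K} x_j (A_j ⊗ B_j) has all entries nonnegative and ‖P − S‖_TV ≤ ε. Let P_A and P_B be the marginalized local transition matrices of P with respect to μ, and set Q = (I − γP)^{-1}(r_A ⊗ e + e ⊗ r_B), Q_A = (I − γP_A)^{-1} r_A, Q_B = (I − γP_B)^{-1} r_B (all three inverses exist). Then: (i) ‖P_A − ∑_{j∈K} x_j A_j‖_TV ≤ ε and ‖P_B − ∑_{j∈K} x_j B_j‖_TV ≤ ε; and (ii) ‖Q − (Q_A ⊗ e + e ⊗ Q_B)‖_∞ ≤ 4γ ε (R_A +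 R_B) / (1 − γ)². -/
open Matrix

/-! Regard `‖·‖_TV` as half the `ℓ^∞` operator norm. If `C` is the `0`-`1` matrix of the projection
`α × β → α` and `D` holds the conditional weights of `μ` on its fibres, then `P_A = D P C`,
`D C = 1` and `‖C‖, ‖D‖ ≤ 1`. The separable matrix `S` preserves the functions of the first
coordinate: `S C = C S_A` with `S_A = ∑ x_j A_j`. Hence `P_A - S_A = D (P - S) C`, which gives (i),
and `P C - C P_A = (P - S) C - C (P_A - S_A)`. By the identity
`(1 - a)⁻¹ U - U (1 - b)⁻¹ = (1 - a)⁻¹ (a U - U b) (1 - b)⁻¹` this defect of intertwining controls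
the difference of the value functions, and (ii) is the sum of the estimates for `α` and `β`. -/

section OperatorNorm

open scoped Matrix.Norms.Operator

variable {m n : Type*} [Fintype m] [Fintype n]

theorem linfty_opNorm_le_iff {E : Type*} [SeminormedAddCommGroup E] {M : Matrix m n E} {c : ℝ}
    (hc : 0 ≤ c) : ‖M‖ ≤ c ↔ ∀ i, ∑ j, ‖M i j‖ ≤ c := by
  lift c to NNReal using hc
  rw [linfty_opNorm_def, NNReal.coe_le_coe]
  simp only [Finset.sup_le_iff, Finset.mem_univ, forall_const, ← NNReal.coe_le_coe,
    NNReal.coe_sum, coe_nnnorm]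

theorem linfty_opNorm_sub_le_two_mul_iff [Nonempty m] {M N : Matrix m n ℝ} {ε : ℝ} :
    ‖M - N‖ ≤ 2 * ε ↔ ∀ i, (1 / 2 : ℝ) * ∑ j, |M i j - N i j| ≤ ε := by
  have hscale (s : ℝ) : (1 / 2 : ℝ) * s ≤ ε ↔ s ≤ 2 * ε := by constructor <;> intro <;> linarith
  simp only [hscale]
  by_cases hε : 0 ≤ 2 * ε
  · exact linfty_opNorm_le_iff hε
  · obtain ⟨i⟩ := ‹Nonempty m›
    exact iff_of_false (fun h => hε ((norm_nonneg _).trans h))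
      fun h => hε ((Finset.sum_nonneg fun j _ => abs_nonneg _).trans (h i))

end OperatorNorm

section Resolvent

open scoped Matrix.Norms.Operator

variable {m n : Type*} [Fintype m] [Fintype n] [DecidableEq m] [DecidableEq n]

theorem inv_one_sub_mul_sub_mul_inv_one_sub {R : Type*} [CommRing R] {a : Matrix m m R}
    {b : Matrix n n R} (ha : IsUnit (1 - a).det) (hb : IsUnit (1 - b).det)
    (U : Matrix m n R) :
    (1 - a)⁻¹ * U - U * (1 - b)⁻¹ = (1 - a)⁻¹ * ((a * U - U * b) * (1 - b)⁻¹) := by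
  have hdefect : a * U - U * b = U * (1 - b) - (1 - a) * U := by
    simp only [Matrix.mul_sub, Matrix.sub_mul, Matrix.mul_one, Matrix.one_mul,
      sub_sub_sub_cancel_left]
  rw [hdefect, Matrix.sub_mul, mul_nonsing_inv_cancel_right _ _ hb, Matrix.mul_sub,
    Matrix.mul_assoc (1 - a), nonsing_inv_mul_cancel_left _ _ ha]

variable {𝕜 : Type*} [NormedField 𝕜] {a : Matrix m m 𝕜} {b : Matrix n n 𝕜} {c : ℝ}

theorem norm_le_norm_one_sub_mulVec_div (ha : ‖a‖ ≤ c) (hc : c < 1) (v : m → 𝕜) :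
    ‖v‖ ≤ ‖(1 - a) *ᵥ v‖ / (1 - c) := by
  have hav : ‖a *ᵥ v‖ ≤ c * ‖v‖ := (linfty_opNorm_mulVec a v).trans (by gcongr)
  have hsub : ‖v‖ - ‖a *ᵥ v‖ ≤ ‖v - a *ᵥ v‖ := norm_sub_norm_le v (a *ᵥ v)
  rw [le_div_iff₀ (sub_pos.2 hc), sub_mulVec, one_mulVec]
  linarith

theorem isUnit_det_one_sub_of_linfty_opNorm_lt_one (ha : ‖a‖ < 1) : IsUnit (1 - a).det := by
  rw [← isUnit_iff_isUnit_det, ← mulVec_injective_iff_isUnit]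
  intro v w hvw
  have hbound := norm_le_norm_one_sub_mulVec_div le_rfl ha (v - w)
  rw [mulVec_sub, sub_eq_zero.2 hvw, norm_zero, zero_div] at hbound
  exact sub_eq_zero.1 (norm_le_zero_iff.1 hbound)

theorem norm_inv_one_sub_mulVec_le (ha : ‖a‖ ≤ c) (hc : c < 1) (v : m → 𝕜) :
    ‖(1 - a)⁻¹ *ᵥ v‖ ≤ ‖v‖ / (1 - c) := by
  have h := norm_le_norm_one_sub_mulVec_div ha hc ((1 - a)⁻¹ *ᵥ v)
  rwa [mulVec_mulVec, mul_nonsing_inv _ (isUnit_det_one_sub_of_linfty_opNorm_lt_one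
    (ha.trans_lt hc)), one_mulVec] at h

theorem norm_inv_one_sub_mulVec_sub_le (ha : ‖a‖ ≤ c) (hb : ‖b‖ ≤ c) (hc : c < 1)
    (U : Matrix m n 𝕜) (r : n → 𝕜) :
    ‖(1 - a)⁻¹ *ᵥ (U *ᵥ r) - U *ᵥ ((1 - b)⁻¹ *ᵥ r)‖ ≤
      ‖a * U - U * b‖ * ‖r‖ / (1 - c) ^ 2 := by
  have hidentity : (1 - a)⁻¹ *ᵥ (U *ᵥ r) - U *ᵥ ((1 - b)⁻¹ *ᵥ r) =
      (1 - a)⁻¹ *ᵥ ((a * U - U * b) *ᵥ ((1 - b)⁻¹ *ᵥ r)) := by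
    simp only [mulVec_mulVec, ← sub_mulVec]
    rw [inv_one_sub_mul_sub_mul_inv_one_sub
      (isUnit_det_one_sub_of_linfty_opNorm_lt_one (ha.trans_lt hc))
      (isUnit_det_one_sub_of_linfty_opNorm_lt_one (hb.trans_lt hc))]
  have hdefect : ‖(a * U - U * b) *ᵥ ((1 - b)⁻¹ *ᵥ r)‖ ≤
      ‖a * U - U * b‖ * (‖r‖ / (1 - c)) :=
    (linfty_opNorm_mulVec _ _).trans (by gcongr; exact norm_inv_one_sub_mulVec_le hb hc r)
  calc ‖(1 - a)⁻¹ *ᵥ (U *ᵥ r) - U *ᵥ ((1 - b)⁻¹ *ᵥ r)‖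
      ≤ ‖(a * U - U * b) *ᵥ ((1 - b)⁻¹ *ᵥ r)‖ / (1 - c) :=
        hidentity ▸ norm_inv_one_sub_mulVec_le ha hc _
    _ ≤ ‖a * U - U * b‖ * (‖r‖ / (1 - c)) / (1 - c) :=
        div_le_div_of_nonneg_right hdefect (sub_pos.2 hc).le
    _ = ‖a * U - U * b‖ * ‖r‖ / (1 - c) ^ 2 := by rw [← mul_div_assoc, div_div, ← sq]

end Resolvent

section Lumping

open scoped Matrix.Norms.Operator

variable {ι κ : Type*} [DecidableEq κ]

/-- The collector matrix `C` of a projection `f` of state spaces, in the sense of Kemeny and Snell: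
`C v` is the pullback `v ∘ f`. -/
def collector (f : ι → κ) : Matrix ι κ ℝ :=
  (1 : Matrix κ κ ℝ).submatrix f id

theorem collector_apply (f : ι → κ) (i : ι) (k : κ) :
    collector f i k = if f i = k then 1 else 0 :=
  one_apply

theorem collector_mulVec [Fintype κ] (f : ι → κ) (v : κ → ℝ) : collector f *ᵥ v = v ∘ f := by
  ext i
  simp [mulVec, dotProduct, collector_apply]

theorem collector_mul_apply [Fintype κ] (f : ι → κ) (M : Matrix κ κ ℝ) (i : ι) (k : κ) :
    (collector f * M) i k = M (f i) k := by
  simp [mul_apply, collector_apply]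

variable [Fintype ι]

/-- The distributor matrix `D` of a projection `f` and a weight `μ`: its row at `k` is `μ`
conditioned on the fibre of `f` over `k`. The row is `0` if the fibre has weight `0`. -/
noncomputable def distributor (f : ι → κ) (μ : ι → ℝ) : Matrix κ ι ℝ :=
  of fun k i => if f i = k then μ i / ∑ i' with f i' = k, μ i' else 0

/-- The lumped chain `D T C`: the one-step law of `f` under `T`, started from `μ` conditioned on
a fibre of `f`. -/
noncomputable def lumped (f : ι → κ) (μ : ι → ℝ) (T : Matrix ι ι ℝ) : Matrix κ κ ℝ :=
  distributor f μ * T * collector f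

theorem mul_collector_apply {m : Type*} (M : Matrix m ι ℝ) (f : ι → κ) (i : m) (k : κ) :
    (M * collector f) i k = ∑ j with f j = k, M i j := by
  simp [mul_apply, collector_apply, Finset.sum_filter]

theorem distributor_mul_apply {n : Type*} (f : ι → κ) (μ : ι → ℝ) (M : Matrix ι n ℝ) (k : κ)
    (l : n) : (distributor f μ * M) k l =
      ∑ i with f i = k, μ i / (∑ i' with f i' = k, μ i') * M i l := by
  simp only [mul_apply, distributor, of_apply, ite_mul, zero_mul, Finset.sum_filter]

theorem lumped_apply (f : ι → κ) (μ : ι → ℝ) (T : Matrix ι ι ℝ) (k l : κ) :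
    lumped f μ T k l =
      ∑ i with f i = k, μ i / (∑ i' with f i' = k, μ i') * ∑ j with f j = l, T i j := by
  rw [lumped, Matrix.mul_assoc, distributor_mul_apply]
  simp only [mul_collector_apply]

variable {f : ι → κ} {μ : ι → ℝ}

theorem distributor_mul_collector (hμ : ∀ k, ∑ i with f i = k, μ i ≠ 0) :
    distributor f μ * collector f = 1 := by
  ext k l
  calc (distributor f μ * collector f) k l
      = ∑ i with f i = k, μ i / (∑ i' with f i' = k, μ i') * (1 : Matrix κ κ ℝ) k l := by
        rw [distributor_mul_apply]
        refine Finset.sum_congr rfl fun i hi => ?_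
        rw [collector_apply, (Finset.mem_filter.1 hi).2, one_apply]
    _ = (1 : Matrix κ κ ℝ) k l := by
        rw [← Finset.sum_mul, ← Finset.sum_div, div_self (hμ k), one_mul]

variable [Fintype κ] {S : Matrix ι ι ℝ} {S' : Matrix κ κ ℝ}

theorem norm_collector_le_one (f : ι → κ) : ‖collector f‖ ≤ 1 :=
  (linfty_opNorm_le_iff zero_le_one).2 fun i => by
    simp [collector_apply, apply_ite (norm : ℝ → ℝ)]

theorem norm_distributor_le_one (f : ι → κ) (hμ : ∀ i, 0 ≤ μ i) : ‖distributor f μ‖ ≤ 1 := by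
  refine (linfty_opNorm_le_iff zero_le_one).2 fun k => ?_
  have hmass : 0 ≤ ∑ i with f i = k, μ i := Finset.sum_nonneg fun i _ => hμ i
  calc ∑ i, ‖distributor f μ k i‖ = ∑ i with f i = k, μ i / ∑ i' with f i' = k, μ i' := by
        rw [Finset.sum_filter]
        simp only [distributor, of_apply, apply_ite (norm : ℝ → ℝ), norm_zero,
          Real.norm_of_nonneg (div_nonneg (hμ _) hmass)]
    _ ≤ 1 := by
        rw [← Finset.sum_div]
        exact div_self_le_one _

theorem norm_lumped_le (hμ : ∀ i, 0 ≤ μ i) (T : Matrix ι ι ℝ) : ‖lumped f μ T‖ ≤ ‖T‖ :=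
  calc ‖distributor f μ * T * collector f‖
      ≤ ‖distributor f μ‖ * ‖T‖ * ‖collector f‖ :=
        (linfty_opNorm_mul _ _).trans (by gcongr; exact linfty_opNorm_mul _ _)
    _ ≤ 1 * ‖T‖ * 1 := by
        gcongr
        exacts [norm_distributor_le_one f hμ, norm_collector_le_one f]
    _ = ‖T‖ := by rw [one_mul, mul_one]

theorem lumped_eq_of_mul_collector_eq (hμ : ∀ k, ∑ i with f i = k, μ i ≠ 0)
    (hS : S * collector f = collector f * S') : lumped f μ S = S' := by
  rw [lumped, Matrix.mul_assoc, hS, ← Matrix.mul_assoc, distributor_mul_collector hμ,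
    Matrix.one_mul]

theorem norm_lumped_sub_le (hμ₀ : ∀ i, 0 ≤ μ i) (hμ : ∀ k, ∑ i with f i = k, μ i ≠ 0)
    (hS : S * collector f = collector f * S') (T : Matrix ι ι ℝ) :
    ‖lumped f μ T - S'‖ ≤ ‖T - S‖ := by
  have hsub : lumped f μ T - lumped f μ S = lumped f μ (T - S) := by
    simp only [lumped, Matrix.mul_sub, Matrix.sub_mul]
  rw [← lumped_eq_of_mul_collector_eq hμ hS, hsub]
  exact norm_lumped_le hμ₀ _

theorem norm_mul_collector_sub_collector_mul_lumped_le (hμ₀ : ∀ i, 0 ≤ μ i)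
    (hμ : ∀ k, ∑ i with f i = k, μ i ≠ 0) (hS : S * collector f = collector f * S')
    (T : Matrix ι ι ℝ) :
    ‖T * collector f - collector f * lumped f μ T‖ ≤ 2 * ‖T - S‖ := by
  have hsplit : T * collector f - collector f * lumped f μ T =
      (T - S) * collector f - collector f * (lumped f μ T - S') := by
    rw [Matrix.sub_mul, Matrix.mul_sub, hS, sub_sub_sub_cancel_right]
  calc ‖T * collector f - collector f * lumped f μ T‖
      ≤ ‖(T - S) * collector f‖ + ‖collector f * (lumped f μ T - S')‖ :=
        hsplit ▸ norm_sub_le _ _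
    _ ≤ ‖T - S‖ * ‖collector f‖ + ‖collector f‖ * ‖lumped f μ T - S'‖ :=
        add_le_add (linfty_opNorm_mul _ _) (linfty_opNorm_mul _ _)
    _ ≤ ‖T - S‖ * 1 + 1 * ‖T - S‖ := by
        gcongr
        exacts [norm_collector_le_one f, norm_collector_le_one f, norm_lumped_sub_le hμ₀ hμ hS T]
    _ = 2 * ‖T - S‖ := by ring

theorem norm_inv_mulVec_comp_sub_lumped_le [DecidableEq ι] {T : Matrix ι ι ℝ}
    (hμ₀ : ∀ i, 0 ≤ μ i) (hμ : ∀ k, ∑ i with f i = k, μ i ≠ 0)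
    (hS : S * collector f = collector f * S') (hT : ‖T‖ ≤ 1) {γ : ℝ} (hγ : |γ| < 1)
    (r : κ → ℝ) :
    ‖(1 - γ • T)⁻¹ *ᵥ (r ∘ f) - ((1 - γ • lumped f μ T)⁻¹ *ᵥ r) ∘ f‖ ≤
      2 * |γ| * ‖T - S‖ * ‖r‖ / (1 - |γ|) ^ 2 := by
  have hγT : ‖γ • T‖ ≤ |γ| := by
    rw [norm_smul, Real.norm_eq_abs]
    exact mul_le_of_le_one_right (abs_nonneg γ) hT
  have hγL : ‖γ • lumped f μ T‖ ≤ |γ| := by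
    rw [norm_smul, Real.norm_eq_abs]
    exact mul_le_of_le_one_right (abs_nonneg γ) ((norm_lumped_le hμ₀ T).trans hT)
  have hdefect : ‖(γ • T) * collector f - collector f * (γ • lumped f μ T)‖ ≤
      |γ| * (2 * ‖T - S‖) := by
    rw [Matrix.smul_mul, Matrix.mul_smul, ← smul_sub, norm_smul, Real.norm_eq_abs]
    gcongr
    exact norm_mul_collector_sub_collector_mul_lumped_le hμ₀ hμ hS T
  rw [← collector_mulVec, ← collector_mulVec]
  calc ‖(1 - γ • T)⁻¹ *ᵥ (collector f *ᵥ r) -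
        collector f *ᵥ ((1 - γ • lumped f μ T)⁻¹ *ᵥ r)‖
      ≤ ‖(γ • T) * collector f - collector f * (γ • lumped f μ T)‖ * ‖r‖ / (1 - |γ|) ^ 2 :=
        norm_inv_one_sub_mulVec_sub_le hγT hγL hγ (collector f) r
    _ ≤ |γ| * (2 * ‖T - S‖) * ‖r‖ / (1 - |γ|) ^ 2 := by gcongr
    _ = 2 * |γ| * ‖T - S‖ * ‖r‖ / (1 - |γ|) ^ 2 := by ring

variable {T : Matrix ι ι ℝ} {ε : ℝ}

theorem tv_lumped_sub_le (hμ₀ : ∀ i, 0 ≤ μ i) (hμ : ∀ k, ∑ i with f i = k, μ i ≠ 0)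
    (hS : S * collector f = collector f * S')
    (hTV : ∀ i, (1 / 2 : ℝ) * ∑ j, |T i j - S i j| ≤ ε) (k : κ) :
    (1 / 2 : ℝ) * ∑ l, |lumped f μ T k l - S' k l| ≤ ε := by
  have : Nonempty κ := ⟨k⟩
  have : Nonempty ι := (Finset.nonempty_of_sum_ne_zero (hμ k)).to_subtype.map Subtype.val
  exact linfty_opNorm_sub_le_two_mul_iff.1
    ((norm_lumped_sub_le hμ₀ hμ hS T).trans (linfty_opNorm_sub_le_two_mul_iff.2 hTV)) k

theorem abs_inv_mulVec_comp_sub_lumped_le_of_tv [DecidableEq ι] (hμ₀ : ∀ i, 0 ≤ μ i)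
    (hμ : ∀ k, ∑ i with f i = k, μ i ≠ 0) (hS : S * collector f = collector f * S')
    (hT : ∀ i, ∑ j, |T i j| ≤ 1) (hTV : ∀ i, (1 / 2 : ℝ) * ∑ j, |T i j - S i j| ≤ ε)
    {γ R : ℝ} (hγ : |γ| < 1) {r : κ → ℝ} (hr : ∀ k, |r k| ≤ R) (i : ι) :
    |((1 - γ • T)⁻¹ *ᵥ (r ∘ f)) i - ((1 - γ • lumped f μ T)⁻¹ *ᵥ r) (f i)| ≤
      4 * |γ| * ε * R / (1 - |γ|) ^ 2 := by
  have : Nonempty ι := ⟨i⟩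
  have hTS : ‖T - S‖ ≤ 2 * ε := linfty_opNorm_sub_le_two_mul_iff.2 hTV
  have hrR : ‖r‖ ≤ R := (pi_norm_le_iff_of_nonneg ((abs_nonneg _).trans (hr (f i)))).2 hr
  have hε : 0 ≤ 2 * ε := (norm_nonneg _).trans hTS
  calc |((1 - γ • T)⁻¹ *ᵥ (r ∘ f)) i - ((1 - γ • lumped f μ T)⁻¹ *ᵥ r) (f i)|
      ≤ ‖(1 - γ • T)⁻¹ *ᵥ (r ∘ f) - ((1 - γ • lumped f μ T)⁻¹ *ᵥ r) ∘ f‖ :=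
        norm_le_pi_norm ((1 - γ • T)⁻¹ *ᵥ (r ∘ f) - ((1 - γ • lumped f μ T)⁻¹ *ᵥ r) ∘ f) i
    _ ≤ 2 * |γ| * ‖T - S‖ * ‖r‖ / (1 - |γ|) ^ 2 :=
        norm_inv_mulVec_comp_sub_lumped_le hμ₀ hμ hS ((linfty_opNorm_le_iff zero_le_one).2 hT) hγ r
    _ ≤ 2 * |γ| * (2 * ε) * R / (1 - |γ|) ^ 2 := by gcongr
    _ = 4 * |γ| * ε * R / (1 - |γ|) ^ 2 := by ring

end Lumping

section Product

variable {α β : Type*} [Fintype α] [Fintype β]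

theorem sum_filter_fst_eq [DecidableEq α] {M : Type*} [AddCommMonoid M] (F : α × β → M) (a : α) :
    ∑ p with p.1 = a, F p = ∑ b, F (a, b) := by
  simp [Finset.sum_filter, Fintype.sum_prod_type_right]

theorem sum_filter_snd_eq [DecidableEq β] {M : Type*} [AddCommMonoid M] (F : α × β → M) (b : β) :
    ∑ p with p.2 = b, F p = ∑ a, F (a, b) := by
  simp [Finset.sum_filter, Fintype.sum_prod_type]

theorem localA_eq_lumped_fst [DecidableEq α] (P : Matrix (α × β) (α × β) ℝ) (μ : α × β → ℝ) :
    localA P μ = lumped Prod.fst μ P := by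
  ext a a'
  simp only [lumped_apply, sum_filter_fst_eq, localA, of_apply]

theorem localB_eq_lumped_snd [DecidableEq β] (P : Matrix (α × β) (α × β) ℝ) (μ : α × β → ℝ) :
    localB P μ = lumped Prod.snd μ P := by
  ext b b'
  simp only [lumped_apply, sum_filter_snd_eq, localB, of_apply]

theorem marginals_ne_zero {μ : α × β → ℝ} (hμ : ∀ p, 0 < μ p) (hμsum : ∑ p, μ p ≠ 0) :
    (∀ a, ∑ b, μ (a, b) ≠ 0) ∧ ∀ b, ∑ a, μ (a, b) ≠ 0 := by
  obtain ⟨⟨a₀, b₀⟩, -⟩ := Finset.nonempty_of_sum_ne_zero hμsum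
  exact ⟨fun a => (Finset.sum_pos (fun b _ => hμ (a, b)) ⟨b₀, Finset.mem_univ _⟩).ne',
    fun b => (Finset.sum_pos (fun a _ => hμ (a, b)) ⟨a₀, Finset.mem_univ _⟩).ne'⟩

theorem mul_collector_fst_eq [DecidableEq α] {S : Matrix (α × β) (α × β) ℝ} {SA : Matrix α α ℝ}
    (hS : ∀ p a', ∑ b', S p (a', b') = SA p.1 a') :
    S * collector (Prod.fst : α × β → α) = collector (Prod.fst : α × β → α) * SA := by
  ext p a'
  rw [mul_collector_apply, sum_filter_fst_eq, hS, collector_mul_apply]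

theorem mul_collector_snd_eq [DecidableEq β] {S : Matrix (α × β) (α × β) ℝ} {SB : Matrix β β ℝ}
    (hS : ∀ p b', ∑ a', S p (a', b') = SB p.2 b') :
    S * collector (Prod.snd : α × β → β) = collector (Prod.snd : α × β → β) * SB := by
  ext p b'
  rw [mul_collector_apply, sum_filter_snd_eq, hS, collector_mul_apply]

end Product

section Separable

variable {α β K : Type*} [Fintype K] (x : K → ℝ)

theorem sum_smul_kron_apply (A : K → Matrix α α ℝ) (B : K → Matrix β β ℝ) (p q : α × β) :
    (∑ j, x j • kron (A j) (B j)) p q = ∑ j, x j * (A j p.1 q.1 * B j p.2 q.2) := by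
  simp [Matrix.sum_apply, kron]

theorem sum_snd_sum_smul_kron [Fintype β] (A : K → Matrix α α ℝ) {B : K → Matrix β β ℝ}
    (hB : ∀ j b, ∑ b', B j b b' = 1) (p : α × β) (a' : α) :
    ∑ b', (∑ j, x j • kron (A j) (B j)) p (a', b') = (∑ j, x j • A j) p.1 a' := by
  simp_rw [sum_smul_kron_apply]
  rw [Finset.sum_comm]
  simp [← Finset.mul_sum, hB, Matrix.sum_apply]

theorem sum_fst_sum_smul_kron [Fintype α] {A : K → Matrix α α ℝ} (B : K → Matrix β β ℝ)
    (hA : ∀ j a, ∑ a', A j a a' = 1) (p : α × β) (b' : β) :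
    ∑ a', (∑ j, x j • kron (A j) (B j)) p (a', b') = (∑ j, x j • B j) p.2 b' := by
  simp_rw [sum_smul_kron_apply]
  rw [Finset.sum_comm]
  simp [← Finset.mul_sum, ← Finset.sum_mul, hA, Matrix.sum_apply]

end Separable

theorem IsTransition.sum_abs_le_one {ι : Type*} [Fintype ι] {P : Matrix ι ι ℝ}
    (hP : IsTransition P) (i : ι) : ∑ j, |P i j| ≤ 1 := by
  simp only [abs_of_nonneg (hP.1 _ _), hP.2, le_refl]

theorem stmt10_general {α β : Type*} [Fintype α] [Fintype β] [DecidableEq α] [DecidableEq β]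
    {P S : Matrix (α × β) (α × β) ℝ} {SA : Matrix α α ℝ} {SB : Matrix β β ℝ}
    (hP : ∀ p, ∑ q, |P p q| ≤ 1) {μ : α × β → ℝ} (hμ₀ : ∀ p, 0 ≤ μ p)
    (hμA : ∀ a, ∑ b, μ (a, b) ≠ 0) (hμB : ∀ b, ∑ a, μ (a, b) ≠ 0)
    {γ RA RB ε : ℝ} (hγ : |γ| < 1) {rA : α → ℝ} {rB : β → ℝ}
    (hrA : ∀ a, |rA a| ≤ RA) (hrB : ∀ b, |rB b| ≤ RB)
    (hSA : ∀ p a', ∑ b', S p (a', b') = SA p.1 a')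
    (hSB : ∀ p b', ∑ a', S p (a', b') = SB p.2 b')
    (hTV : ∀ p, (1 / 2 : ℝ) * ∑ q, |P p q - S p q| ≤ ε) :
    (∀ a, (1 / 2 : ℝ) * ∑ a', |localA P μ a a' - SA a a'| ≤ ε) ∧
    (∀ b, (1 / 2 : ℝ) * ∑ b', |localB P μ b b' - SB b b'| ≤ ε) ∧
    ∀ p, |((1 - γ • P)⁻¹ *ᵥ fun q => rA q.1 + rB q.2) p
            - (((1 - γ • localA P μ)⁻¹ *ᵥ rA) p.1 + ((1 - γ • localB P μ)⁻¹ *ᵥ rB) p.2)|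
        ≤ 4 * |γ| * ε * (RA + RB) / (1 - |γ|) ^ 2 := by
  have hCA := mul_collector_fst_eq hSA
  have hCB := mul_collector_snd_eq hSB
  simp only [← sum_filter_fst_eq μ] at hμA
  simp only [← sum_filter_snd_eq μ] at hμB
  rw [localA_eq_lumped_fst, localB_eq_lumped_snd]
  refine ⟨tv_lumped_sub_le hμ₀ hμA hCA hTV, tv_lumped_sub_le hμ₀ hμB hCB hTV, fun p => ?_⟩
  have hA := abs_inv_mulVec_comp_sub_lumped_le_of_tv hμ₀ hμA hCA hP hTV hγ hrA p
  have hB := abs_inv_mulVec_comp_sub_lumped_le_of_tv hμ₀ hμB hCB hP hTV hγ hrB p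
  have hr : (fun q : α × β => rA q.1 + rB q.2) = rA ∘ Prod.fst + rB ∘ Prod.snd := rfl
  rw [hr, mulVec_add, Pi.add_apply, add_sub_add_comm]
  calc _ ≤ _ := (abs_add_le _ _).trans (add_le_add hA hB)
    _ = 4 * |γ| * ε * (RA + RB) / (1 - |γ|) ^ 2 := by ring

/-- Decomposition error bounded by the measure of Markov entanglement w.r.t. the total
variation distance: TV-closeness of `P` to a separable matrix `S` gives TV-bounds for the
local transitions and an entrywise `4γε(R_A+R_B)/(1−γ)²` bound on the Q-value
decomposition error. -/
theorem stmt10 {α β K : Type*} [Fintype α] [Fintype β] [Fintype K]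
    [DecidableEq α] [DecidableEq β]
    (P : Matrix (α × β) (α × β) ℝ) (hP : IsTransition P)
    (μ : α × β → ℝ) (hμpos : ∀ p, 0 < μ p) (hμsum : ∑ p, μ p = 1)
    (hstat : ∀ q, ∑ p, μ p * P p q = μ q)
    (γ RA RB ε : ℝ) (hγ0 : 0 ≤ γ) (hγ1 : γ < 1)
    (rA : α → ℝ) (rB : β → ℝ) (hrA : ∀ a, |rA a| ≤ RA) (hrB : ∀ b, |rB b| ≤ RB)
    (x : K → ℝ) (hx : ∑ j, x j = 1)
    (A : K → Matrix α α ℝ) (B : K → Matrix β β ℝ)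
    (hA : ∀ j, IsTransition (A j)) (hB : ∀ j, IsTransition (B j))
    (hSnonneg : ∀ p q, 0 ≤ (∑ j, x j • kron (A j) (B j)) p q)
    (hTV : ∀ p, (1 / 2 : ℝ) * ∑ q, |P p q - (∑ j, x j • kron (A j) (B j)) p q| ≤ ε) :
    (∀ a, (1 / 2 : ℝ) * ∑ a', |localA P μ a a' - (∑ j, x j • A j) a a'| ≤ ε) ∧
    (∀ b, (1 / 2 : ℝ) * ∑ b', |localB P μ b b' - (∑ j, x j • B j) b b'| ≤ ε) ∧
    ∀ p, |((1 - γ • P)⁻¹).mulVec (fun q => rA q.1 + rB q.2) p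
            - ((((1 - γ • localA P μ)⁻¹).mulVec rA) p.1
              + (((1 - γ • localB P μ)⁻¹).mulVec rB) p.2)|
        ≤ 4 * γ * ε * (RA + RB) / (1 - γ) ^ 2 := by
  obtain ⟨hμA, hμB⟩ := marginals_ne_zero hμpos (hμsum.trans_ne one_ne_zero)
  simpa only [abs_of_nonneg hγ0] using stmt10_general hP.sum_abs_le_one (fun p => (hμpos p).le)
    hμA hμB ((abs_of_nonneg hγ0).trans_lt hγ1) hrA hrB
    (sum_snd_sum_smul_kron x A fun j => (hB j).2) (sum_fst_sum_smul_kron x B fun j => (hA j).2) hTV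
end

section
/- Let α and β be finite types and P a transition matrix over α × β with strictly positive stationary probability vector μ. Then the marginalized local transition matrix P_A of P with respect to μ is itself a transition matrix over α, and the marginal μ_A(a) = ∑_b μ(a,b) is a stationary distribution of P_A, i.e. ∑_a μ_A(a) · P_A a a' = μ_A(a') for every a' ∈ α. -/
open Matrix

/-!
The flow `F a a' = ∑ b, ∑ b', μ (a, b) * P (a, b) (a', b')` is the stationary probability that the
first coordinate steps from `a` to `a'`, and `P_A` is `F` with row `a` divided by `μ_A a`. Both the
row sums and the column sums of `F` are `μ_A`: the former because the rows of `P` sum to `1`, the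
latter because `μ` is stationary. The row sums make `P_A` a transition matrix, the column sums make
`μ_A` stationary for it.
-/

section Marginal

variable {α β R : Type*} [Fintype β] [AddCommMonoid R]

/-- The marginal of a weight vector on `α × β` on the first coordinate, the paper's `μ_A`. -/
def fstMarginal (μ : α × β → R) (a : α) : R :=
  ∑ b, μ (a, b)

theorem fstMarginal_pos [Fintype α] [PartialOrder R] [IsOrderedCancelAddMonoid R]
    {μ : α × β → R} (hμ : ∀ p, 0 < μ p) (hsum : ∑ p, μ p ≠ 0) (a : α) :
    0 < fstMarginal μ a := by
  obtain ⟨p, -⟩ := Finset.nonempty_of_sum_ne_zero hsum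
  exact Finset.sum_pos (fun b _ => hμ (a, b)) ⟨p.2, Finset.mem_univ p.2⟩

end Marginal

section Flow

variable {α β R : Type*} [Fintype β] [Semiring R]

/-- The flow between first coordinates: the weight of the steps from the fibre over `a` to the fibre
over `a'` when the starting point is weighted by `μ`. It is the marginalized local transition matrix
before its rows are normalized. -/
def fstFlow (P : Matrix (α × β) (α × β) R) (μ : α × β → R) : Matrix α α R :=
  Matrix.of fun a a' => ∑ b, ∑ b', μ (a, b) * P (a, b) (a', b')

theorem fstFlow_nonneg [PartialOrder R] [IsOrderedRing R] {P : Matrix (α × β) (α × β) R}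
    {μ : α × β → R} (hP : ∀ p q, 0 ≤ P p q) (hμ : ∀ p, 0 ≤ μ p) (a a' : α) :
    0 ≤ fstFlow P μ a a' :=
  Finset.sum_nonneg fun b _ => Finset.sum_nonneg fun b' _ =>
    mul_nonneg (hμ (a, b)) (hP (a, b) (a', b'))

variable [Fintype α]

theorem sum_fstFlow_right {P : Matrix (α × β) (α × β) R} (hP : ∀ p, ∑ q, P p q = 1)
    (μ : α × β → R) (a : α) : ∑ a', fstFlow P μ a a' = fstMarginal μ a :=
  calc
    ∑ a', fstFlow P μ a a' = ∑ b, ∑ a', ∑ b', μ (a, b) * P (a, b) (a', b') := Finset.sum_comm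
    _ = ∑ b, μ (a, b) * ∑ q, P (a, b) q := by
      simp only [Fintype.sum_prod_type, Finset.mul_sum]
    _ = fstMarginal μ a := by simp only [hP, mul_one, fstMarginal]

theorem sum_fstFlow_left {P : Matrix (α × β) (α × β) R} {μ : α × β → R}
    (hstat : ∀ q, ∑ p, μ p * P p q = μ q) (a' : α) :
    ∑ a, fstFlow P μ a a' = fstMarginal μ a' :=
  calc
    ∑ a, fstFlow P μ a a' = ∑ p, ∑ b', μ p * P p (a', b') :=
      (Fintype.sum_prod_type fun p => ∑ b', μ p * P p (a', b')).symm
    _ = ∑ b', ∑ p, μ p * P p (a', b') := Finset.sum_comm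
    _ = fstMarginal μ a' := Finset.sum_congr rfl fun b' _ => hstat (a', b')

end Flow

section LocalTransition

variable {α β : Type*} [Fintype α] [Fintype β]

theorem localA_apply (P : Matrix (α × β) (α × β) ℝ) (μ : α × β → ℝ) (a a' : α) :
    localA P μ a a' = fstFlow P μ a a' / fstMarginal μ a := by
  simp only [localA, fstFlow, fstMarginal, Matrix.of_apply, Finset.sum_div, Finset.mul_sum,
    div_mul_eq_mul_div]

variable {P : Matrix (α × β) (α × β) ℝ} {μ : α × β → ℝ}

theorem IsTransition.localA (hP : IsTransition P) (hμ : ∀ p, 0 ≤ μ p)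
    (hμA : ∀ a, fstMarginal μ a ≠ 0) : IsTransition (localA P μ) := by
  refine ⟨fun a a' => ?_, fun a => ?_⟩
  · rw [localA_apply]
    exact div_nonneg (fstFlow_nonneg hP.1 hμ a a') (Finset.sum_nonneg fun b _ => hμ (a, b))
  · simp only [localA_apply]
    rw [← Finset.sum_div, sum_fstFlow_right hP.2, div_self (hμA a)]

theorem sum_fstMarginal_mul_localA (hstat : ∀ q, ∑ p, μ p * P p q = μ q)
    (hμA : ∀ a, fstMarginal μ a ≠ 0) (a' : α) :
    ∑ a, fstMarginal μ a * localA P μ a a' = fstMarginal μ a' := by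
  simp only [localA_apply, mul_div_cancel₀ _ (hμA _)]
  exact sum_fstFlow_left hstat a'

theorem stmt13_general (hP : IsTransition P) (hμ : ∀ p, 0 ≤ μ p)
    (hμA : ∀ a, fstMarginal μ a ≠ 0) (hstat : ∀ q, ∑ p, μ p * P p q = μ q) :
    IsTransition (localA P μ) ∧
    ∀ a', ∑ a, fstMarginal μ a * localA P μ a a' = fstMarginal μ a' :=
  ⟨hP.localA hμ hμA, sum_fstMarginal_mul_localA hstat hμA⟩

end LocalTransition

/-- The marginalized local transition matrix `P_A` is itself a transition matrix, and the
marginal `μ_A(a) = ∑_b μ(a,b)` is a stationary distribution of `P_A`. -/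
theorem stmt13 {α β : Type*} [Fintype α] [Fintype β]
    (P : Matrix (α × β) (α × β) ℝ) (hP : IsTransition P)
    (μ : α × β → ℝ) (hμpos : ∀ p, 0 < μ p) (hμsum : ∑ p, μ p = 1)
    (hstat : ∀ q, ∑ p, μ p * P p q = μ q) :
    IsTransition (localA P μ) ∧
    ∀ a', ∑ a, (∑ b, μ (a, b)) * localA P μ a a' = ∑ b, μ (a', b) :=
  stmt13_general hP (fun p => (hμpos p).le)
    (fun a => (fstMarginal_pos hμpos (hμsum ▸ one_ne_zero) a).ne') hstat
end

section
/- Let N ≥ 1 and let ι_1, …, ι_N be finite types; write Σ = ι_1 × ⋯ × ι_N for the product type. Let P be a transition matrix over Σ with strictly positive stationary probability vector μ, and γ ∈ [0,1). For each agent i, let r_i : ι_i → ℝ with ‖r_i‖_∞ ≤ R_i, and suppose there is a transition matrix M_i over ι_i such that for every x : ι_i → ℝ with ‖x‖_∞ ≤ 1, (1/2) ‖ P · lift_i(x) − lift_i(M_i x) ‖_μ ≤ ε_i. Define, for each i, the marginalized local transition matrix P_i over ι_i by P_i u u' = ∑_{s : s_i = u} (μ(s)/μ_i(u)) · ∑_{s'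 : s'_i = u'} P s s', where μ_i(u) = ∑_{s : s_i = u} μ(s) > 0, and set Q = (I − γP)^{-1}( ∑_{i=1}^N lift_i(r_i) ) and Q_i = (I − γP_i)^{-1} r_i. Then: (i) for every i and every x : ι_i → ℝ with ‖x‖_∞ ≤ 1, ‖(P_i − M_i) x‖_{μ_i} ≤ 2ε_i; and (ii) ‖ Q − ∑_{i=1}^N lift_i(Q_i) ‖_μ ≤ 4γ ( ∑_{i=1}^N ε_i R_i ) / (1 − γ)². -/
open Matrix Finset

/-- Marginal of `μ` on coordinate `i`. -/
def marginPi {N : ℕ} {ι : Fin N → Type*} [∀ i, Fintype (ι i)] [∀ i, DecidableEq (ι i)]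
    (μ : (∀ i, ι i) → ℝ) (i : Fin N) (u : ι i) : ℝ :=
  ∑ s ∈ Finset.univ.filter (fun s : ∀ i, ι i => s i = u), μ s

/-- The marginalized local transition matrix of agent `i`. -/
noncomputable def localPi {N : ℕ} {ι : Fin N → Type*} [∀ i, Fintype (ι i)]
    [∀ i, DecidableEq (ι i)]
    (P : Matrix (∀ i, ι i) (∀ i, ι i) ℝ) (μ : (∀ i, ι i) → ℝ) (i : Fin N) :
    Matrix (ι i) (ι i) ℝ :=
  Matrix.of fun u u' =>
    ∑ s ∈ Finset.univ.filter (fun s : ∀ i, ι i => s i = u),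
      (μ s / marginPi μ i u) *
        ∑ s' ∈ Finset.univ.filter (fun s' : ∀ i, ι i => s' i = u'), P s s'

/-!
Let `E` be the `μ`-conditional expectation given a coordinate `π : S → K`. The local matrix
is `E P L`, where `L x = x ∘ π`, and `E L = 1`; moreover `E` does not increase weighted `ℓ¹` norms.
Hence `‖P L x - L (E P L x)‖ ≤ 2 ‖P L x - L y‖` for *every* local vector `y`: up to a factor two the
local matrix is the best local approximation of `P`, in particular as good as `M`.

The decomposition error `D = Q - ∑ i, Q i ∘ π i` satisfies the Bellman equation
`D = γ P D + γ ∑ i, (P L - L Pᵢ) (Q i)`. Since `P` is nonexpansive for the weighted `ℓ¹` norm, this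
costs one factor `(1 - γ)⁻¹`; bounding `Q i` by `R i / (1 - γ)` in sup norm costs the other.
-/

section Seminorm

variable {E : Type*}

theorem seminorm_le_div_one_sub [AddCommGroup E] [Module ℝ E] (p : Seminorm ℝ E) {γ : ℝ}
    (hγ0 : 0 ≤ γ) (hγ1 : γ < 1) {x y : E} (hyx : p y ≤ p x) :
    p x ≤ p (x - γ • y) / (1 - γ) := by
  have htri : p x ≤ p (x - γ • y) + γ * p y := by
    simpa [map_smul_eq_mul, abs_of_nonneg hγ0] using map_add_le_add p (x - γ • y) (γ • y)
  rw [le_div_iff₀ (sub_pos.mpr hγ1)]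
  linarith [mul_le_mul_of_nonneg_left hyx hγ0]

theorem seminorm_le_mul_norm_of_unitBall [NormedAddCommGroup E] [NormedSpace ℝ E]
    (p : Seminorm ℝ E) {c : ℝ} (hp : ∀ x, ‖x‖ ≤ 1 → p x ≤ c) (x : E) : p x ≤ c * ‖x‖ := by
  obtain rfl | hx := eq_or_ne x 0
  · simp
  · have hunit : p (‖x‖⁻¹ • x) ≤ c := hp _ (norm_smul_inv_norm hx).le
    rwa [map_smul_eq_mul, norm_inv, norm_norm, inv_mul_le_iff₀ (norm_pos_iff.mpr hx),
      mul_comm] at hunit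

end Seminorm

section DiscountedValue

variable {S : Type*} [Fintype S] [DecidableEq S] {A : Matrix S S ℝ} {γ : ℝ}

/-- The value function `(I - γ A)⁻¹ b` of the reward `b` under the dynamics `A` with discount
factor `γ`. The inverse is the matrix inverse, which is zero when `I - γ A` is singular. -/
noncomputable def discountedValue (γ : ℝ) (A : Matrix S S ℝ) (b : S → ℝ) : S → ℝ :=
  (1 - γ • A)⁻¹ *ᵥ b

theorem one_sub_smul_mulVec (γ : ℝ) (A : Matrix S S ℝ) (x : S → ℝ) :
    (1 - γ • A) *ᵥ x = x - γ • A *ᵥ x := by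
  rw [sub_mulVec, one_mulVec, smul_mulVec]

theorem isUnit_one_sub_smul_of_nonexpansive (hA : ∀ x : S → ℝ, ‖A *ᵥ x‖ ≤ ‖x‖)
    (hγ0 : 0 ≤ γ) (hγ1 : γ < 1) : IsUnit (1 - γ • A) := by
  rw [← mulVec_injective_iff_isUnit]
  refine (injective_iff_map_eq_zero (1 - γ • A).mulVecLin).mpr fun x hx => ?_
  have hle := seminorm_le_div_one_sub (normSeminorm ℝ (S → ℝ)) hγ0 hγ1 (hA x)
  rw [mulVecLin_apply, one_sub_smul_mulVec] at hx
  simpa [hx] using hle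

theorem discountedValue_sub_smul_mulVec (hA : ∀ x : S → ℝ, ‖A *ᵥ x‖ ≤ ‖x‖)
    (hγ0 : 0 ≤ γ) (hγ1 : γ < 1) (b : S → ℝ) :
    discountedValue γ A b - γ • A *ᵥ discountedValue γ A b = b := by
  have hdet := (isUnit_iff_isUnit_det _).mp (isUnit_one_sub_smul_of_nonexpansive hA hγ0 hγ1)
  rw [← one_sub_smul_mulVec, discountedValue, mulVec_mulVec, mul_nonsing_inv _ hdet, one_mulVec]

theorem norm_discountedValue_le (hA : ∀ x : S → ℝ, ‖A *ᵥ x‖ ≤ ‖x‖)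
    (hγ0 : 0 ≤ γ) (hγ1 : γ < 1) (b : S → ℝ) :
    ‖discountedValue γ A b‖ ≤ ‖b‖ / (1 - γ) := by
  simpa only [coe_normSeminorm, discountedValue_sub_smul_mulVec hA hγ0 hγ1] using
    seminorm_le_div_one_sub (normSeminorm ℝ (S → ℝ)) hγ0 hγ1 (hA (discountedValue γ A b))

end DiscountedValue

section WeightedL1

variable {S : Type*} [Fintype S] {μ : S → ℝ}

/-- The weighted `ℓ¹` seminorm `‖x‖_μ = ∑ s, μ s * |x s|`. The weight enters through the proof that
it is nonnegative. -/
noncomputable def weightedL1 (hμ : ∀ s, 0 ≤ μ s) : Seminorm ℝ (S → ℝ) :=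
  Seminorm.of (fun x => ∑ s, μ s * |x s|)
    (fun x y => by
      simp only [← sum_add_distrib, ← mul_add]
      exact sum_le_sum fun s _ => mul_le_mul_of_nonneg_left (abs_add_le _ _) (hμ s))
    (fun a x => by
      simp only [Pi.smul_apply, smul_eq_mul, abs_mul, mul_left_comm, mul_sum, Real.norm_eq_abs])

theorem weightedL1_apply (hμ : ∀ s, 0 ≤ μ s) (x : S → ℝ) :
    weightedL1 hμ x = ∑ s, μ s * |x s| := rfl

theorem abs_mulVec_le_mulVec_abs {T : Type*} {A : Matrix T S ℝ} (hA : ∀ t s, 0 ≤ A t s)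
    (x : S → ℝ) (t : T) : |(A *ᵥ x) t| ≤ (A *ᵥ fun s => |x s|) t := by
  refine (abs_sum_le_sum_abs _ _).trans_eq (sum_congr rfl fun s _ => ?_)
  rw [abs_mul, abs_of_nonneg (hA t s)]

theorem weightedL1_mulVec_le (hμ : ∀ s, 0 ≤ μ s) {P : Matrix S S ℝ} (hP : ∀ s t, 0 ≤ P s t)
    (hμP : μ ᵥ* P ≤ μ) (x : S → ℝ) : weightedL1 hμ (P *ᵥ x) ≤ weightedL1 hμ x :=
  calc ∑ s, μ s * |(P *ᵥ x) s|
      ≤ μ ⬝ᵥ (P *ᵥ fun s => |x s|) :=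
        sum_le_sum fun s _ => mul_le_mul_of_nonneg_left (abs_mulVec_le_mulVec_abs hP x s) (hμ s)
    _ = (μ ᵥ* P) ⬝ᵥ fun s => |x s| := dotProduct_mulVec _ _ _
    _ ≤ μ ⬝ᵥ fun s => |x s| := dotProduct_le_dotProduct_of_nonneg_right hμP fun _ => abs_nonneg _

theorem IsTransition.norm_mulVec_le {P : Matrix S S ℝ} (hP : IsTransition P) (x : S → ℝ) :
    ‖P *ᵥ x‖ ≤ ‖x‖ := by
  refine (pi_norm_le_iff_of_nonneg (norm_nonneg x)).mpr fun s => ?_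
  calc |(P *ᵥ x) s| ≤ ∑ t, P s t * |x t| := abs_mulVec_le_mulVec_abs hP.1 x s
    _ ≤ ∑ t, P s t * ‖x‖ :=
        sum_le_sum fun t _ => mul_le_mul_of_nonneg_left (norm_le_pi_norm x t) (hP.1 s t)
    _ = ‖x‖ := by rw [← sum_mul, hP.2, one_mul]

end WeightedL1

section Lift

variable {S K : Type*} [Fintype S] [Fintype K]

theorem norm_comp_le (π : S → K) (x : K → ℝ) : ‖x ∘ π‖ ≤ ‖x‖ :=
  (pi_norm_le_iff_of_nonneg (norm_nonneg x)).mpr fun s => norm_le_pi_norm x (π s)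

/-- The failure of `M` to describe the action of `P` on functions of `π`, as a linear map: the
difference between `P` applied to the lift `x ∘ π` and the lift of `M x`. -/
noncomputable def liftDefect (π : S → K) (P : Matrix S S ℝ) (M : Matrix K K ℝ) :
    (K → ℝ) →ₗ[ℝ] (S → ℝ) :=
  P.mulVecLin ∘ₗ LinearMap.funLeft ℝ ℝ π - LinearMap.funLeft ℝ ℝ π ∘ₗ M.mulVecLin

theorem liftDefect_apply (π : S → K) (P : Matrix S S ℝ) (M : Matrix K K ℝ) (x : K → ℝ) :
    liftDefect π P M x = P *ᵥ (x ∘ π) - (M *ᵥ x) ∘ π := rfl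

end Lift

section Fiber

variable {S K : Type*} [Fintype S] [DecidableEq K] {π : S → K} {μ : S → ℝ}

/-- The pushforward of the weight `μ` along `π`: its sums over the fibers of `π`. -/
def fiberSum (π : S → K) (μ : S → ℝ) (u : K) : ℝ :=
  ∑ s with π s = u, μ s

/-- The `μ`-weighted mean of `f` over each fiber of `π`, i.e. the conditional expectation of `f`
given `π`. Fibers of zero mass get the value zero. -/
noncomputable def fiberAverage (π : S → K) (μ f : S → ℝ) (u : K) : ℝ :=
  ∑ s with π s = u, μ s / fiberSum π μ u * f s

theorem fiberSum_nonneg (hμ : ∀ s, 0 ≤ μ s) (u : K) : 0 ≤ fiberSum π μ u :=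
  sum_nonneg fun s _ => hμ s

theorem fiberSum_pos (hμ : ∀ s, 0 < μ s) (hπ : Function.Surjective π) (u : K) :
    0 < fiberSum π μ u := by
  obtain ⟨s, hs⟩ := hπ u
  exact sum_pos (fun s _ => hμ s) ⟨s, by simpa using hs⟩

theorem fiberSum_mul_fiberAverage (hμ : ∀ s, 0 ≤ μ s) (f : S → ℝ) (u : K) :
    fiberSum π μ u * fiberAverage π μ f u = ∑ s with π s = u, μ s * f s := by
  rw [fiberAverage, mul_sum]
  refine sum_congr rfl fun s hs => ?_
  have hnull : fiberSum π μ u = 0 → μ s = 0 := fun h =>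
    (sum_eq_zero_iff_of_nonneg fun s _ => hμ s).mp h s hs
  rw [← mul_assoc, mul_div_cancel_of_imp' hnull]

theorem fiberAverage_sub_comp {u : K} (hu : fiberSum π μ u ≠ 0) (f : S → ℝ) (x : K → ℝ) :
    fiberAverage π μ (f - x ∘ π) u = fiberAverage π μ f u - x u := by
  have hconst : ∑ s with π s = u, μ s / fiberSum π μ u * x (π s) = x u :=
    calc ∑ s with π s = u, μ s / fiberSum π μ u * x (π s)
        = ∑ s with π s = u, μ s / fiberSum π μ u * x u :=
          sum_congr rfl fun s hs => by rw [(mem_filter.mp hs).2]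
      _ = x u := by rw [← sum_mul, ← sum_div, ← fiberSum, div_self hu, one_mul]
  simp only [fiberAverage, Pi.sub_apply, Function.comp_apply, mul_sub, sum_sub_distrib, hconst]

variable [Fintype K]

theorem sum_fiberSum_mul (π : S → K) (μ : S → ℝ) (x : K → ℝ) :
    ∑ u, fiberSum π μ u * x u = ∑ s, μ s * x (π s) := by
  rw [← sum_fiberwise univ π]
  refine sum_congr rfl fun u _ => ?_
  rw [fiberSum, sum_mul]
  exact sum_congr rfl fun s hs => by rw [(mem_filter.mp hs).2]

theorem weightedL1_comp (hμ : ∀ s, 0 ≤ μ s) (π : S → K) (x : K → ℝ) :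
    weightedL1 hμ (x ∘ π) = weightedL1 (fiberSum_nonneg (π := π) hμ) x :=
  (sum_fiberSum_mul π μ fun u => |x u|).symm

theorem weightedL1_fiberAverage_le (hμ : ∀ s, 0 ≤ μ s) (f : S → ℝ) :
    weightedL1 (fiberSum_nonneg (π := π) hμ) (fiberAverage π μ f) ≤ weightedL1 hμ f := by
  rw [weightedL1_apply, weightedL1_apply, ← sum_fiberwise univ π]
  refine sum_le_sum fun u _ => ?_
  calc fiberSum π μ u * |fiberAverage π μ f u|
      = |∑ s with π s = u, μ s * f s| := by
        rw [← fiberSum_mul_fiberAverage hμ, abs_mul, abs_of_nonneg (fiberSum_nonneg hμ u)]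
    _ ≤ ∑ s with π s = u, |μ s * f s| := abs_sum_le_sum_abs _ _
    _ = ∑ s with π s = u, μ s * |f s| := by simp only [abs_mul, abs_of_nonneg (hμ _)]

theorem norm_fiberAverage_le (hμ : ∀ s, 0 ≤ μ s) (f : S → ℝ) : ‖fiberAverage π μ f‖ ≤ ‖f‖ := by
  refine (pi_norm_le_iff_of_nonneg (norm_nonneg f)).mpr fun u => ?_
  have hweight : ∀ s, 0 ≤ μ s / fiberSum π μ u := fun s => div_nonneg (hμ s) (fiberSum_nonneg hμ u)
  calc |fiberAverage π μ f u|
      ≤ ∑ s with π s = u, |μ s / fiberSum π μ u * f s| := abs_sum_le_sum_abs _ _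
    _ ≤ ∑ s with π s = u, μ s / fiberSum π μ u * ‖f‖ := by
        refine sum_le_sum fun s _ => ?_
        rw [abs_mul, abs_of_nonneg (hweight s)]
        exact mul_le_mul_of_nonneg_left (norm_le_pi_norm f s) (hweight s)
    _ = fiberSum π μ u / fiberSum π μ u * ‖f‖ := by rw [← sum_mul, ← sum_div, ← fiberSum]
    _ ≤ ‖f‖ := mul_le_of_le_one_left (norm_nonneg f) (div_self_le_one _)

end Fiber

section LumpedMatrix

variable {S K : Type*} [Fintype S] [Fintype K] [DecidableEq K] {π : S → K} {μ : S → ℝ}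
  {P : Matrix S S ℝ}

/-- The matrix on `K` obtained from `P` by summing its columns over the fibers of `π` and averaging
its rows over the fibers with weight `μ`. For a coordinate of a product it is `localPi`. -/
noncomputable def lumpedMatrix (π : S → K) (μ : S → ℝ) (P : Matrix S S ℝ) : Matrix K K ℝ :=
  Matrix.of fun u u' => fiberAverage π μ (fun s => fiberSum π (P s) u') u

theorem lumpedMatrix_mulVec (π : S → K) (μ : S → ℝ) (P : Matrix S S ℝ) (x : K → ℝ) :
    lumpedMatrix π μ P *ᵥ x = fiberAverage π μ (P *ᵥ (x ∘ π)) := by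
  ext u
  have hcolumns (s : S) : (P *ᵥ (x ∘ π)) s = ∑ u', fiberSum π (P s) u' * x u' :=
    (sum_fiberSum_mul π (P s) x).symm
  simp only [fiberAverage, hcolumns]
  simp only [mulVec, dotProduct, lumpedMatrix, of_apply, fiberAverage, sum_mul, mul_sum, mul_assoc]
  exact sum_comm

theorem norm_lumpedMatrix_mulVec_le (hμ : ∀ s, 0 ≤ μ s) (hP : ∀ x : S → ℝ, ‖P *ᵥ x‖ ≤ ‖x‖)
    (x : K → ℝ) : ‖lumpedMatrix π μ P *ᵥ x‖ ≤ ‖x‖ := by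
  rw [lumpedMatrix_mulVec]
  exact (norm_fiberAverage_le hμ _).trans ((hP _).trans (norm_comp_le π x))

theorem weightedL1_lumpedMatrix_mulVec_sub_le (hμ : ∀ s, 0 ≤ μ s)
    (hfiber : ∀ u, 0 < fiberSum π μ u) (P : Matrix S S ℝ) (M : Matrix K K ℝ) (x : K → ℝ) :
    weightedL1 (fiberSum_nonneg (π := π) hμ) (lumpedMatrix π μ P *ᵥ x - M *ᵥ x)
      ≤ weightedL1 hμ (liftDefect π P M x) := by
  have haverage : lumpedMatrix π μ P *ᵥ x - M *ᵥ x = fiberAverage π μ (liftDefect π P M x) := by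
    ext u
    rw [liftDefect_apply, fiberAverage_sub_comp (hfiber u).ne', lumpedMatrix_mulVec, Pi.sub_apply]
  exact haverage ▸ weightedL1_fiberAverage_le hμ _

theorem weightedL1_liftDefect_lumpedMatrix_le (hμ : ∀ s, 0 ≤ μ s)
    (hfiber : ∀ u, 0 < fiberSum π μ u) (P : Matrix S S ℝ) (M : Matrix K K ℝ) (x : K → ℝ) :
    weightedL1 hμ (liftDefect π P (lumpedMatrix π μ P) x)
      ≤ 2 * weightedL1 hμ (liftDefect π P M x) := by
  have hsplit : liftDefect π P (lumpedMatrix π μ P) x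
      = liftDefect π P M x - (lumpedMatrix π μ P *ᵥ x - M *ᵥ x) ∘ π := by
    simp only [liftDefect_apply, Pi.sub_comp]
    abel
  calc weightedL1 hμ (liftDefect π P (lumpedMatrix π μ P) x)
      ≤ weightedL1 hμ (liftDefect π P M x)
          + weightedL1 hμ ((lumpedMatrix π μ P *ᵥ x - M *ᵥ x) ∘ π) :=
        hsplit ▸ map_sub_le_add _ _ _
    _ ≤ 2 * weightedL1 hμ (liftDefect π P M x) := by
        rw [weightedL1_comp]
        linarith [weightedL1_lumpedMatrix_mulVec_sub_le hμ hfiber P M x]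

theorem weightedL1_liftDefect_discountedValue_le (hμ : ∀ s, 0 ≤ μ s)
    (hfiber : ∀ u, 0 < fiberSum π μ u) (hP : ∀ x : S → ℝ, ‖P *ᵥ x‖ ≤ ‖x‖) {γ : ℝ}
    (hγ0 : 0 ≤ γ) (hγ1 : γ < 1) {M : Matrix K K ℝ} {c : ℝ}
    (hM : ∀ x : K → ℝ, ‖x‖ ≤ 1 → weightedL1 hμ (liftDefect π P M x) ≤ c) (b : K → ℝ) :
    weightedL1 hμ (liftDefect π P (lumpedMatrix π μ P)
      (discountedValue γ (lumpedMatrix π μ P) b)) ≤ 2 * (c * (‖b‖ / (1 - γ))) := by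
  have hc : 0 ≤ c := by simpa using hM 0 (by simp)
  have hball (x : K → ℝ) : weightedL1 hμ (liftDefect π P M x) ≤ c * ‖x‖ :=
    seminorm_le_mul_norm_of_unitBall ((weightedL1 hμ).comp (liftDefect π P M)) hM x
  refine (weightedL1_liftDefect_lumpedMatrix_le hμ hfiber P M _).trans ?_
  gcongr
  refine (hball _).trans ?_
  gcongr
  exact norm_discountedValue_le (norm_lumpedMatrix_mulVec_le hμ hP) hγ0 hγ1 b

end LumpedMatrix

section Decomposition

variable {S I : Type*} [Fintype S] [DecidableEq S] [Fintype I] {κ : I → Type*}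
  [∀ i, Fintype (κ i)] [∀ i, DecidableEq (κ i)] {P : Matrix S S ℝ} {γ : ℝ}

theorem weightedL1_discountedValue_sub_sum_le (π : ∀ i, S → κ i)
    (hP : ∀ x : S → ℝ, ‖P *ᵥ x‖ ≤ ‖x‖) {μ : S → ℝ} (hμ : ∀ s, 0 ≤ μ s)
    (hPμ : ∀ x, weightedL1 hμ (P *ᵥ x) ≤ weightedL1 hμ x)
    {A : ∀ i, Matrix (κ i) (κ i) ℝ} (hA : ∀ i (x : κ i → ℝ), ‖A i *ᵥ x‖ ≤ ‖x‖)
    (hγ0 : 0 ≤ γ) (hγ1 : γ < 1) (r : ∀ i, κ i → ℝ) :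
    weightedL1 hμ
        (discountedValue γ P (∑ i, r i ∘ π i) - ∑ i, discountedValue γ (A i) (r i) ∘ π i)
      ≤ γ * (∑ i, weightedL1 hμ (liftDefect (π i) P (A i) (discountedValue γ (A i) (r i))))
          / (1 - γ) := by
  set Q := discountedValue γ P (∑ i, r i ∘ π i)
  set q := fun i => discountedValue γ (A i) (r i)
  have hQ : Q - γ • P *ᵥ Q = ∑ i, r i ∘ π i := discountedValue_sub_smul_mulVec hP hγ0 hγ1 _
  have hq (i : I) : q i ∘ π i - γ • (A i *ᵥ q i) ∘ π i = r i ∘ π i :=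
    congrArg (· ∘ π i) (discountedValue_sub_smul_mulVec (hA i) hγ0 hγ1 (r i))
  have hbellman : (Q - ∑ i, q i ∘ π i) - γ • P *ᵥ (Q - ∑ i, q i ∘ π i)
      = γ • ∑ i, liftDefect (π i) P (A i) (q i) := by
    simp only [← hq, sum_sub_distrib, ← smul_sum] at hQ
    simp only [liftDefect_apply, sum_sub_distrib, mulVec_sub, mulVec_sum, smul_sub]
    linear_combination hQ
  refine (seminorm_le_div_one_sub _ hγ0 hγ1 (hPμ _)).trans ?_
  rw [hbellman, map_smul_eq_mul, Real.norm_of_nonneg hγ0]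
  have := sub_pos.mpr hγ1
  gcongr
  exact le_sum_of_subadditive _ (map_zero _).le (map_add_le_add _) _ _

theorem stmt14_general [Nonempty S] (π : ∀ i, S → κ i) (P : Matrix S S ℝ)
    (hP : ∀ x : S → ℝ, ‖P *ᵥ x‖ ≤ ‖x‖) (μ : S → ℝ) (hμ : ∀ s, 0 ≤ μ s)
    (hPμ : ∀ x, weightedL1 hμ (P *ᵥ x) ≤ weightedL1 hμ x)
    (hfiber : ∀ i u, 0 < fiberSum (π i) μ u) (γ : ℝ) (hγ0 : 0 ≤ γ) (hγ1 : γ < 1)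
    (r : ∀ i, κ i → ℝ) (R : I → ℝ) (hr : ∀ i u, |r i u| ≤ R i)
    (M : ∀ i, Matrix (κ i) (κ i) ℝ) (ε : I → ℝ)
    (hM : ∀ i (x : κ i → ℝ), (∀ u, |x u| ≤ 1) →
      1 / 2 * weightedL1 hμ (liftDefect (π i) P (M i) x) ≤ ε i) :
    (∀ i (x : κ i → ℝ), (∀ u, |x u| ≤ 1) →
      weightedL1 (fiberSum_nonneg (π := π i) hμ)
        (lumpedMatrix (π i) μ P *ᵥ x - M i *ᵥ x) ≤ 2 * ε i) ∧
    weightedL1 hμ (discountedValue γ P (fun s => ∑ i, r i (π i s))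
        - fun s => ∑ i, discountedValue γ (lumpedMatrix (π i) μ P) (r i) (π i s))
      ≤ 4 * γ * (∑ i, ε i * R i) / (1 - γ) ^ 2 := by
  have hγ : 0 < 1 - γ := sub_pos.mpr hγ1
  have hball (i : I) (x : κ i → ℝ) (hx : ‖x‖ ≤ 1) :
      weightedL1 hμ (liftDefect (π i) P (M i) x) ≤ 2 * ε i := by
    linarith [hM i x fun u => (norm_le_pi_norm x u).trans hx]
  have hε (i : I) : 0 ≤ ε i := by simpa using hM i 0 (by simp)
  have hnorm (i : I) : ‖r i‖ ≤ R i :=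
    have : Nonempty (κ i) := ‹Nonempty S›.map (π i)
    (pi_norm_le_iff_of_nonempty _).mpr (hr i)
  refine ⟨fun i x hx => ?_, ?_⟩
  · linarith [weightedL1_lumpedMatrix_mulVec_sub_le hμ (hfiber i) P (M i) x, hM i x hx]
  · have herror := weightedL1_discountedValue_sub_sum_le π hP hμ hPμ
      (fun i => norm_lumpedMatrix_mulVec_le (π := π i) hμ hP) hγ0 hγ1 r
    simp only [sum_fn, Function.comp_apply] at herror
    refine herror.trans ?_
    calc _ ≤ γ * (∑ i, 2 * (2 * ε i * (R i / (1 - γ)))) / (1 - γ) := by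
          gcongr with i
          refine (weightedL1_liftDefect_discountedValue_le hμ (hfiber i) hP hγ0 hγ1 (hball i)
            (r i)).trans ?_
          have := hε i
          gcongr
          exact hnorm i
      _ = 4 * γ * (∑ i, ε i * R i) / (1 - γ) ^ 2 := by
          simp only [mul_sum, sum_div]
          exact sum_congr rfl fun i _ => by field_simp; ring

end Decomposition

/-- Multi-agent value decomposition error in `μ`-norm bounded by the agent-wise
`μ`-weighted total-variation entanglement measures. -/
theorem stmt14 (N : ℕ) (hN : 1 ≤ N) (ι : Fin N → Type*) [∀ i, Fintype (ι i)]
    [∀ i, DecidableEq (ι i)]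
    (P : Matrix (∀ i, ι i) (∀ i, ι i) ℝ) (hP : IsTransition P)
    (μ : (∀ i, ι i) → ℝ) (hμpos : ∀ s, 0 < μ s) (hμsum : ∑ s, μ s = 1)
    (hstat : ∀ s', ∑ s, μ s * P s s' = μ s')
    (γ : ℝ) (hγ0 : 0 ≤ γ) (hγ1 : γ < 1)
    (r : ∀ i, ι i → ℝ) (R : Fin N → ℝ) (hr : ∀ i u, |r i u| ≤ R i)
    (M : ∀ i, Matrix (ι i) (ι i) ℝ) (hM : ∀ i, IsTransition (M i))
    (ε : Fin N → ℝ)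
    (hATV : ∀ (i : Fin N) (x : ι i → ℝ), (∀ u, |x u| ≤ 1) →
      (1 / 2 : ℝ) * ∑ s, μ s * |P.mulVec (fun t => x (t i)) s - ((M i).mulVec x) (s i)|
        ≤ ε i) :
    (∀ (i : Fin N) (x : ι i → ℝ), (∀ u, |x u| ≤ 1) →
      ∑ u, marginPi μ i u * |(localPi P μ i).mulVec x u - (M i).mulVec x u| ≤ 2 * ε i) ∧
    ∑ s, μ s * |((1 - γ • P)⁻¹).mulVec (fun t => ∑ i, r i (t i)) s
          - ∑ i, ((1 - γ • localPi P μ i)⁻¹).mulVec (r i) (s i)|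
      ≤ 4 * γ * (∑ i, ε i * R i) / (1 - γ) ^ 2 := by
  have hne : Nonempty (∀ i, ι i) :=
    univ_nonempty_iff.mp (nonempty_of_sum_ne_zero (hμsum.trans_ne one_ne_zero))
  have (i : Fin N) : Nonempty (ι i) := hne.map (· i)
  exact stmt14_general (fun i (s : ∀ i, ι i) => s i) P hP.norm_mulVec_le μ (fun s => (hμpos s).le)
    (weightedL1_mulVec_le _ hP.1 (funext hstat).le)
    (fun i => fiberSum_pos hμpos (Function.surjective_eval i)) γ hγ0 hγ1 r R hr M ε hATV
end
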